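/- Let 1 < p < ∞ and let E ⊆ ℝⁿ be a closed set. Suppose there exist x ∈ E, r_a > 0, c_fat > 0 and r_0 > 0 such that E is locally uniformly p-fat at E ∩ B̄(x, r_a) with parameters c_fat and r_0, i.e. for every z ∈ E ∩ B̄(x, r_a) and every 0 < r < r_0 one has cap_p({w ∈ B̄(0,1/2) : z + r w ∈ E}; B(0,1)) ≥ c_fat. Then there exist ε = ε(n,p,c_fat) with 0 < ε < p − 1 and a constant c̃_fat = c̃_fat(n,p,c_fat) > 0 such that E is locally uniformly (p−ε)-fat at E ∩ B̄(x, r̃_0) with parameters c̃_fat and r̃_0, where r̃_0 = (1/4)·min{r_a, r_0}. -/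

import Mathlib

open MeasureTheory Metric Set

noncomputable section

/-- Euclidean space `ℝⁿ`. -/
abbrev En (n : ℕ) : Type := EuclideanSpace ℝ (Fin n)

/-- Norm of the (a.e. defined, by Rademacher's theorem) gradient of `u` at `x`. -/
def gnorm {n : ℕ} (u : En n → ℝ) (x : En n) : ℝ := ‖fderiv ℝ u x‖

/-- Admissible test functions for the level-`t` capacity of `E` in `O`:
Lipschitz on the closure of `O`, `u ≥ t` on `E`, `u = 0` on `∂O`. -/
def Adm {n : ℕ} (E O : Set (En n)) (t : ℝ) : Set (En n → ℝ) :=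
  {u | (∃ K, LipschitzOnWith K u (closure O)) ∧ (∀ x ∈ E, t ≤ u x) ∧
    ∀ x ∈ frontier O, u x = 0}

/-- Level-`t` variational capacity with integrand `ψ` and normalization `ψm`. -/
def capLevel {n : ℕ} (ψ : En n → ℝ → ℝ) (ψm : ℝ → ℝ)
    (E O : Set (En n)) (t : ℝ) : ℝ :=
  sInf ((fun u => ∫ x in O, ψ x (gnorm u x) / ψm t) '' Adm E O t)

/-- Infimal capacity with integrand `ψ` and normalization `ψm`. -/
def capInfGen {n : ℕ} (ψ : En n → ℝ → ℝ) (ψm : ℝ → ℝ) (E O : Set (En n)) : ℝ :=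
  ⨅ t : Ioi (0 : ℝ), capLevel ψ ψm E O (t : ℝ)

/-- The double-phase integrand `φ(x,t) = t^p + a(x) t^q`. -/
def phi {n : ℕ} (a : En n → ℝ) (p q : ℝ) (x : En n) (t : ℝ) : ℝ :=
  t ^ p + a x * t ^ q

/-- `a_O^- = inf_{x ∈ O} a(x)`. -/
def aInfOn {n : ℕ} (a : En n → ℝ) (O : Set (En n)) : ℝ := sInf (a '' O)

/-- `a_O^+ = sup_{x ∈ O} a(x)`. -/
def aSupOn {n : ℕ} (a : En n → ℝ) (O : Set (En n)) : ℝ := sSup (a '' O)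

/-- `φ_O^-(t) = t^p + a_O^- t^q`. -/
def phiMinus {n : ℕ} (a : En n → ℝ) (p q : ℝ) (O : Set (En n)) (t : ℝ) : ℝ :=
  t ^ p + aInfOn a O * t ^ q

/-- Level-`t` variational capacity for the double-phase integrand. -/
def capPhiLevel {n : ℕ} (a : En n → ℝ) (p q t : ℝ) (E O : Set (En n)) : ℝ :=
  capLevel (phi a p q) (phiMinus a p q O) E O t

/-- Infimal `φ`-capacity. -/
def capPhiInf {n : ℕ} (a : En n → ℝ) (p q : ℝ) (E O : Set (En n)) : ℝ :=
  ⨅ t : Ioi (0 : ℝ), capPhiLevel a p q (t : ℝ) E O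

/-- Variational `p`-capacity. -/
def capP {n : ℕ} (p : ℝ) (E O : Set (En n)) : ℝ :=
  sInf ((fun u => ∫ x in O, gnorm u x ^ p) '' Adm E O 1)

/-- The rescaled set `{x ∈ B̄(0,1/2) : z + r x ∈ E}`. -/
def shiftedSet {n : ℕ} (E : Set (En n)) (z : En n) (r : ℝ) : Set (En n) :=
  {x ∈ closedBall (0 : En n) (1 / 2) | z + r • x ∈ E}

/-- Local uniform infimal `φ`-fatness with parameters `cfat` and `ro`. -/
def LocUnifPhiFat {n : ℕ} (a : En n → ℝ) (p q : ℝ) (E : Set (En n))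
    (cfat ro : ℝ) : Prop :=
  ∀ z ∈ E, ∀ r : ℝ, 0 < r → r < ro →
    cfat ≤ capPhiInf (fun x => a (z + r • x)) p q (shiftedSet E z r) (ball (0 : En n) 1)

/-- Local uniform `p`-fatness with parameters `cfat` and `ro`. -/
def LocUnifPFat {n : ℕ} (p : ℝ) (E : Set (En n)) (cfat ro : ℝ) : Prop :=
  ∀ z ∈ E, ∀ r : ℝ, 0 < r → r < ro →
    cfat ≤ capP p (shiftedSet E z r) (ball (0 : En n) 1)

/-- `Lip_0(Ω)`: Lipschitz functions with compact support contained in `Ω`,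
extended by zero to `ℝⁿ`. -/
def Lip0 {n : ℕ} (Ω : Set (En n)) : Set (En n → ℝ) :=
  {u | (∃ K, LipschitzWith K u) ∧ HasCompactSupport u ∧ tsupport u ⊆ Ω}

/-- Restricted centered maximal operator `M_R f(x) = sup_{0<r<R} ⨍_{B(x,r)} |f|`. -/
def maxOp {n : ℕ} (R : ℝ) (f : En n → ℝ) (x : En n) : ℝ :=
  ⨆ r : Ioo (0 : ℝ) R, ⨍ y in ball x (r : ℝ), |f y|

/-- Local uniform `p`-fatness of `E` at every point of a subset `S`. -/
def LocUnifPFatAt {n : ℕ} (p : ℝ) (E S : Set (En n)) (cfat r0 : ℝ) : Prop :=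
  ∀ z ∈ S, ∀ r : ℝ, 0 < r → r < r0 →
    cfat ≤ capP p (shiftedSet E z r) (ball (0 : En n) 1)

open scoped ENNReal NNReal Topology

/-!
Fatness yields a Maz'ya-Poincaré inequality for functions `W` vanishing on the set: on a `t`-tube
around it, `∫ |W|^p ≤ C t^p ∫ |∇W|^p`. Integrating against `t ^ (-(p + τ) - 1) dt` gives Hardy's
inequality with a weight `dist ^ (-τ)` and the constant `C / τ`. Applied to `V * dist ^ a` with a
small `a`, it absorbs the error made by differentiating the weight and becomes an inequality for
the weight `dist ^ (β p)`, `β > 0`.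

Testing that inequality with a cutoff that vanishes on a cover of the set bounds the content of the
cover in dimension `n - p + β p` from below when the origin is at distance `1` from the set. A
general cover either has large content because its enlargement fills a fixed ball, or leaves many
holes; rescaling each hole to unit distance and summing over a Vitali subfamily bounds the content
again.

Finally, if `u ≥ 1` at a point and `u = 0` far away, Hölder's inequality along rays gives a ball
around that point on which `∫ |∇u|^q ≥ κ r ^ (n - p + β p)` for `q = p - β p / 2 < p`. Disjoint
balls of this kind, whose enlargements cover the set, add up to the lower bound for the
`q`-capacity.
-/

section Calculus

variable {E : Type*} [NormedAddCommGroup E] [NormedSpace ℝ E]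

lemma locallyLipschitz_mul {X : Type*} [PseudoEMetricSpace X] {u v : X → ℝ}
    (hu : LocallyLipschitz u) (hv : LocallyLipschitz v) :
    LocallyLipschitz fun x => u x * v x :=
  (ContDiff.locallyLipschitz (𝕂 := ℝ) (contDiff_mul (𝔸 := ℝ))).comp (hu.prodMk hv)

lemma enorm_fderiv_mul_le {u v : E → ℝ} {x : E} (hu : DifferentiableAt ℝ u x)
    (hv : DifferentiableAt ℝ v x) :
    ‖fderiv ℝ (fun y => u y * v y) x‖ₑ ≤ ‖u x‖ₑ * ‖fderiv ℝ v x‖ₑ + ‖v x‖ₑ * ‖fderiv ℝ u x‖ₑ := by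
  rw [fderiv_fun_mul hu hv]
  refine (enorm_add_le (u x • fderiv ℝ v x) (v x • fderiv ℝ u x)).trans_eq ?_
  rw [enorm_smul, enorm_smul]

lemma enorm_sub_le_mul_lintegral_fderiv {u : E → ℝ} (hu : LocallyLipschitz u) {x v : E}
    (hd : ∀ᵐ t : ℝ, t ∈ Ioc (0 : ℝ) 1 → DifferentiableAt ℝ u (x + t • v)) :
    ‖u (x + v) - u x‖ₑ ≤ ‖v‖ₑ * ∫⁻ t in Ioc (0 : ℝ) 1, ‖fderiv ℝ u (x + t • v)‖ₑ := by
  set f : ℝ → ℝ := fun t => u (x + t • v) with hf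
  have hline : LocallyLipschitz fun t : ℝ => x + t • v :=
    ContDiff.locallyLipschitz (𝕂 := ℝ) (by fun_prop)
  obtain ⟨K, hK⟩ := (hu.comp hline).locallyLipschitzOn.exists_lipschitzOnWith_of_compact
    (isCompact_uIcc (a := (0 : ℝ)) (b := 1))
  have hftc : ∫ t in (0 : ℝ)..1, deriv f t = f 1 - f 0 :=
    hK.absolutelyContinuousOnInterval.integral_deriv_eq_sub
  have h01 : f 1 - f 0 = u (x + v) - u x := by simp [hf]
  rw [← h01, ← hftc, intervalIntegral.integral_of_le zero_le_one,
    ← lintegral_const_mul' _ _ enorm_ne_top]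
  refine (enorm_integral_le_lintegral_enorm _).trans (lintegral_mono_ae ?_)
  filter_upwards [(ae_restrict_iff' measurableSet_Ioc).2 hd] with t ht
  have hderiv : HasDerivAt (fun t : ℝ => x + t • v) v t := by
    simpa using ((hasDerivAt_id t).smul_const v).const_add x
  have hchain : deriv f t = fderiv ℝ u (x + t • v) v :=
    (ht.hasFDerivAt.comp_hasDerivAt t hderiv).deriv
  rw [hchain, mul_comm]
  exact (fderiv ℝ u (x + t • v)).le_opENorm v

lemma rpow_lintegral_le_measure_univ_rpow_mul {α : Type*} [MeasurableSpace α] (μ : Measure α)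
    {p : ℝ} (hp : 1 < p) {f : α → ℝ≥0∞} (hf : AEMeasurable f μ) :
    (∫⁻ x, f x ∂μ) ^ p ≤ μ univ ^ (p - 1) * ∫⁻ x, f x ^ p ∂μ := by
  have hpq := Real.HolderConjugate.conjExponent hp
  have hp0 : p ≠ 0 := by positivity
  have h := ENNReal.lintegral_mul_le_Lp_mul_Lq μ hpq hf (g := fun _ => 1) aemeasurable_const
  simp only [Pi.mul_apply, mul_one, ENNReal.one_rpow, lintegral_const, one_mul] at h
  refine (ENNReal.rpow_le_rpow h hpq.nonneg).trans_eq ?_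
  rw [ENNReal.mul_rpow_of_nonneg _ _ hpq.nonneg, ← ENNReal.rpow_mul, ← ENNReal.rpow_mul,
    one_div_mul_cancel hp0, ENNReal.rpow_one, mul_comm, one_div, mul_comm _ p, ← div_eq_mul_inv,
    hpq.div_conj_eq_sub_one]

variable [MeasurableSpace E] [BorelSpace E] {μ : Measure E}

lemma setLIntegral_comp_add_right_le {G : Type*} [AddGroup G] [MeasurableSpace G]
    [MeasurableAdd G] {μ : Measure G} [μ.IsAddRightInvariant] {s t : Set G} {v : G}
    (hst : ∀ x ∈ s, x + v ∈ t) (f : G → ℝ≥0∞) :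
    ∫⁻ x in s, f (x + v) ∂μ ≤ ∫⁻ x in t, f x ∂μ := by
  rw [← (measurePreserving_add_right μ v).setLIntegral_comp_preimage_emb
    (measurableEmbedding_addRight v) f t]
  exact lintegral_mono_set hst

variable [FiniteDimensional ℝ E] [μ.IsAddHaarMeasure]

lemma ae_differentiableAt_of_locallyLipschitz {u : E → ℝ} (hu : LocallyLipschitz u) :
    ∀ᵐ x ∂μ, DifferentiableAt ℝ u x := by
  have h : ∀ k : ℕ, ∀ᵐ x ∂μ, x ∈ closedBall (0 : E) k →
      DifferentiableWithinAt ℝ u (closedBall 0 k) x := fun k => by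
    obtain ⟨K, hK⟩ := hu.locallyLipschitzOn.exists_lipschitzOnWith_of_compact
      (isCompact_closedBall (0 : E) k)
    exact hK.ae_differentiableWithinAt_of_mem
  filter_upwards [ae_all_iff.2 h] with x hx
  obtain ⟨k, hk⟩ := exists_nat_gt ‖x‖
  have hxk : x ∈ ball (0 : E) k := by simpa using hk
  exact (hx k (ball_subset_closedBall hxk)).differentiableAt
    (Filter.mem_of_superset (isOpen_ball.mem_nhds hxk) ball_subset_closedBall)

lemma ae_ae_differentiableAt_line {u : E → ℝ} (hu : LocallyLipschitz u) (v : E) :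
    ∀ᵐ x ∂μ, ∀ᵐ t : ℝ, DifferentiableAt ℝ u (x + t • v) := by
  have hmeas : MeasurableSet {z : E × ℝ | DifferentiableAt ℝ u (z.1 + z.2 • v)} :=
    (measurableSet_of_differentiableAt ℝ u).preimage (by fun_prop)
  exact (Measure.ae_ae_comm hmeas).2 <| .of_forall fun t =>
    (measurePreserving_add_right μ (t • v)).quasiMeasurePreserving.ae
      (ae_differentiableAt_of_locallyLipschitz hu)

lemma ae_ae_differentiableAt_ray {u : E → ℝ} (hu : LocallyLipschitz u) (x : E) :
    ∀ᵐ v ∂μ, ∀ᵐ t : ℝ, t ∈ Ioc (0 : ℝ) 1 → DifferentiableAt ℝ u (x + t • v) := by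
  have hmeas : MeasurableSet {z : E × ℝ | z.2 ∈ Ioc (0 : ℝ) 1 →
      DifferentiableAt ℝ u (x + z.2 • z.1)} :=
    (measurableSet_Ioc.preimage measurable_snd).imp
      ((measurableSet_of_differentiableAt ℝ u).preimage (by fun_prop))
  refine (Measure.ae_ae_comm hmeas).2 (.of_forall fun t => ?_)
  by_cases ht : t ∈ Ioc (0 : ℝ) 1
  · have hq : Measure.QuasiMeasurePreserving (fun v : E => x + t • v) μ μ :=
      (measurePreserving_add_left μ x).quasiMeasurePreserving.comp
        (Measure.quasiMeasurePreserving_smul (μ := μ) ht.1.ne')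
    exact (hq.ae (ae_differentiableAt_of_locallyLipschitz hu)).mono fun v hv _ => hv
  · exact .of_forall fun v h => absurd h ht

lemma lintegral_enorm_translate_sub_rpow_le {u : E → ℝ} (hu : LocallyLipschitz u) {p : ℝ}
    (hp : 1 < p) {s t : Set E} {v : E} (hst : ∀ x ∈ s, ∀ τ ∈ Ioc (0 : ℝ) 1, x + τ • v ∈ t) :
    ∫⁻ x in s, ‖u (x + v) - u x‖ₑ ^ p ∂μ ≤ ‖v‖ₑ ^ p * ∫⁻ x in t, ‖fderiv ℝ u x‖ₑ ^ p ∂μ := by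
  have hp0 : 0 ≤ p := by linarith
  have hmeas : Measurable fun x => ‖fderiv ℝ u x‖ₑ ^ p :=
    (measurable_fderiv ℝ u).enorm.pow_const p
  have hpt : ∀ᵐ x ∂μ, ‖u (x + v) - u x‖ₑ ^ p ≤
      ‖v‖ₑ ^ p * ∫⁻ τ in Ioc (0 : ℝ) 1, ‖fderiv ℝ u (x + τ • v)‖ₑ ^ p := by
    filter_upwards [ae_ae_differentiableAt_line hu v] with x hx
    have hjensen := rpow_lintegral_le_measure_univ_rpow_mul (volume.restrict (Ioc (0 : ℝ) 1)) hp
      (f := fun τ => ‖fderiv ℝ u (x + τ • v)‖ₑ)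
      ((measurable_fderiv ℝ u).enorm.comp (by fun_prop)).aemeasurable
    simp only [Measure.restrict_apply_univ, Real.volume_Ioc, sub_zero, ENNReal.ofReal_one,
      ENNReal.one_rpow, one_mul] at hjensen
    refine (ENNReal.rpow_le_rpow (enorm_sub_le_mul_lintegral_fderiv hu
      (hx.mono fun t ht _ => ht)) hp0).trans ?_
    rw [ENNReal.mul_rpow_of_nonneg _ _ hp0]
    gcongr
  calc ∫⁻ x in s, ‖u (x + v) - u x‖ₑ ^ p ∂μ
      ≤ ∫⁻ x in s, (‖v‖ₑ ^ p * ∫⁻ τ in Ioc (0 : ℝ) 1, ‖fderiv ℝ u (x + τ • v)‖ₑ ^ p) ∂μ :=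
        lintegral_mono_ae (ae_restrict_of_ae hpt)
    _ = ‖v‖ₑ ^ p * ∫⁻ τ in Ioc (0 : ℝ) 1, ∫⁻ x in s, ‖fderiv ℝ u (x + τ • v)‖ₑ ^ p ∂μ := by
        rw [lintegral_const_mul' _ _ (ENNReal.rpow_ne_top_of_nonneg hp0 enorm_ne_top)]
        congr 1
        refine lintegral_lintegral_swap (Measurable.aemeasurable ?_)
        exact hmeas.comp (by fun_prop : Measurable fun z : E × ℝ => z.1 + z.2 • v)
    _ ≤ ‖v‖ₑ ^ p * ∫⁻ _ in Ioc (0 : ℝ) 1, ∫⁻ x in t, ‖fderiv ℝ u x‖ₑ ^ p ∂μ := by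
        refine mul_le_mul_right ?_ _
        exact setLIntegral_mono' measurableSet_Ioc fun τ hτ =>
          setLIntegral_comp_add_right_le (fun x hx => hst x hx τ hτ) _
    _ = ‖v‖ₑ ^ p * ∫⁻ x in t, ‖fderiv ℝ u x‖ₑ ^ p ∂μ := by simp

lemma exists_poincare (μ : Measure E) [μ.IsAddHaarMeasure] {p : ℝ} (hp : 1 < p) :
    ∃ C : ℝ≥0, ∀ u : E → ℝ, LocallyLipschitz u → ∃ m : ℝ,
      ∫⁻ y in ball 0 1, ‖u y - m‖ₑ ^ p ∂μ ≤ C * ∫⁻ x in ball 0 3, ‖fderiv ℝ u x‖ₑ ^ p ∂μ := by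
  have hp0 : 0 ≤ p := by linarith
  have hball : μ (ball 0 1) ≠ 0 := (measure_ball_pos _ _ one_pos).ne'
  have hball' : μ (ball 0 1) ≠ ∞ := measure_ball_lt_top.ne
  set A := (μ (ball 0 1))⁻¹ * (2 ^ p * μ (closedBall 0 2)) with hA
  have hA' : A ≠ ∞ :=
    ENNReal.mul_ne_top (ENNReal.inv_ne_top.2 hball) <| ENNReal.mul_ne_top
      (ENNReal.rpow_ne_top_of_nonneg hp0 ENNReal.ofNat_ne_top) measure_closedBall_lt_top.ne
  refine ⟨A.toNNReal, fun u hu => ?_⟩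
  rw [ENNReal.coe_toNNReal hA']
  have huc := hu.continuous
  obtain ⟨x, -, hx⟩ := exists_le_setLAverage (μ := μ) (s := ball 0 1)
    (f := fun x => ∫⁻ y in ball 0 1, ‖u y - u x‖ₑ ^ p ∂μ) hball hball'
    (Measurable.lintegral_prod_right' (f := fun z : E × E => ‖u z.2 - u z.1‖ₑ ^ p)
      (by fun_prop)).aemeasurable
  refine ⟨u x, hx.trans ?_⟩
  rw [setLAverage_eq, ENNReal.div_eq_inv_mul, hA, mul_assoc]
  gcongr
  calc ∫⁻ x in ball 0 1, ∫⁻ y in ball 0 1, ‖u y - u x‖ₑ ^ p ∂μ ∂μ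
      ≤ ∫⁻ x in ball 0 1, ∫⁻ v in closedBall 0 2, ‖u (x + v) - u x‖ₑ ^ p ∂μ ∂μ := by
        refine setLIntegral_mono' measurableSet_ball fun x hx => ?_
        have hsub : ∀ y ∈ ball (0 : E) 1, y + -x ∈ closedBall (0 : E) 2 := fun y hy => by
          rw [mem_ball_zero_iff] at hx hy
          rw [mem_closedBall_zero_iff, ← sub_eq_add_neg]
          linarith [norm_sub_le y x]
        simpa using setLIntegral_comp_add_right_le hsub fun v => ‖u (x + v) - u x‖ₑ ^ p
    _ = ∫⁻ v in closedBall 0 2, ∫⁻ x in ball 0 1, ‖u (x + v) - u x‖ₑ ^ p ∂μ ∂μ :=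
        lintegral_lintegral_swap (by fun_prop)
    _ ≤ ∫⁻ v in closedBall 0 2, 2 ^ p * ∫⁻ x in ball 0 3, ‖fderiv ℝ u x‖ₑ ^ p ∂μ ∂μ := by
        refine setLIntegral_mono' measurableSet_closedBall fun v hv => ?_
        rw [mem_closedBall_zero_iff] at hv
        refine (lintegral_enorm_translate_sub_rpow_le hu hp (t := ball 0 3)
          fun x hx τ hτ => ?_).trans ?_
        · rw [mem_ball_zero_iff] at hx ⊢
          have hτv : ‖τ • v‖ ≤ 1 * 2 := by
            rw [norm_smul, Real.norm_of_nonneg hτ.1.le]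
            gcongr
            exact hτ.2
          linarith [norm_add_le x (τ • v)]
        · gcongr
          rw [← ofReal_norm]
          exact ENNReal.ofReal_le_ofNat.2 hv
    _ = 2 ^ p * μ (closedBall 0 2) * ∫⁻ x in ball 0 3, ‖fderiv ℝ u x‖ₑ ^ p ∂μ := by
        rw [setLIntegral_const]
        ring

end Calculus

section Cutoff

/-- The cutoff vanishing on `closedBall a ρ`, equal to `1` outside `ball a (2 * ρ)`, and affine in
the distance to `a` in between. -/
def annularCutoff {X : Type*} [PseudoMetricSpace X] (a : X) (ρ : ℝ) (x : X) : ℝ :=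
  max 0 (min 1 (dist x a / ρ - 1))

section Metric

variable {X : Type*} [PseudoMetricSpace X] {a x : X} {ρ : ℝ}

lemma annularCutoff_nonneg : 0 ≤ annularCutoff a ρ x := le_max_left _ _

lemma annularCutoff_le_one : annularCutoff a ρ x ≤ 1 := max_le zero_le_one (min_le_left _ _)

lemma annularCutoff_eq_zero (hρ : 0 < ρ) (h : dist x a ≤ ρ) : annularCutoff a ρ x = 0 :=
  max_eq_left <| (min_le_right _ _).trans <| sub_nonpos.2 <| (div_le_one hρ).2 h

lemma annularCutoff_eq_one (hρ : 0 < ρ) (h : 2 * ρ ≤ dist x a) : annularCutoff a ρ x = 1 := by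
  have h1 : 1 ≤ dist x a / ρ - 1 := by linarith [(le_div_iff₀ hρ).2 h]
  rw [annularCutoff, min_eq_left h1, max_eq_right zero_le_one]

lemma lipschitzWith_annularCutoff (a : X) (hρ : 0 < ρ) :
    LipschitzWith ρ⁻¹.toNNReal (annularCutoff a ρ) := by
  have h : LipschitzWith ρ⁻¹.toNNReal fun x => dist x a / ρ - 1 := by
    refine LipschitzWith.of_dist_le_mul fun x y => ?_
    rw [Real.dist_eq, Real.coe_toNNReal _ (by positivity), sub_sub_sub_cancel_right, ← sub_div,
      abs_div, abs_of_pos hρ, div_eq_inv_mul]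
    gcongr
    exact abs_dist_sub_le x y a
  exact (h.const_min 1).const_max 0

/-- The cutoff equal to `1` on `closedBall a ρ` and vanishing outside `ball a (2 * ρ)`. -/
def ballCutoff {X : Type*} [PseudoMetricSpace X] (a : X) (ρ : ℝ) (x : X) : ℝ :=
  1 - annularCutoff a ρ x

lemma ballCutoff_nonneg : 0 ≤ ballCutoff a ρ x := sub_nonneg.2 annularCutoff_le_one

lemma ballCutoff_le_one : ballCutoff a ρ x ≤ 1 := sub_le_self 1 annularCutoff_nonneg

lemma enorm_ballCutoff_le_one : ‖ballCutoff a ρ x‖ₑ ≤ 1 := by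
  rw [Real.enorm_of_nonneg ballCutoff_nonneg, ENNReal.ofReal_le_one]
  exact ballCutoff_le_one

lemma ballCutoff_eq_one (hρ : 0 < ρ) (h : dist x a ≤ ρ) : ballCutoff a ρ x = 1 := by
  rw [ballCutoff, annularCutoff_eq_zero hρ h, sub_zero]

lemma ballCutoff_eq_zero (hρ : 0 < ρ) (h : 2 * ρ ≤ dist x a) : ballCutoff a ρ x = 0 := by
  rw [ballCutoff, annularCutoff_eq_one hρ h, sub_self]

lemma locallyLipschitz_ballCutoff (a : X) (hρ : 0 < ρ) : LocallyLipschitz (ballCutoff a ρ) :=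
  (LocallyLipschitz.const 1).sub (lipschitzWith_annularCutoff a hρ).locallyLipschitz

end Metric

lemma enorm_fderiv_annularCutoff_le {E : Type*} [NormedAddCommGroup E] [NormedSpace ℝ E]
    (a x : E) {ρ : ℝ} (hρ : 0 < ρ) :
    ‖fderiv ℝ (annularCutoff a ρ) x‖ₑ ≤
      (closedBall a (2 * ρ)).indicator (fun _ => ENNReal.ofReal ρ⁻¹) x := by
  by_cases hx : x ∈ closedBall a (2 * ρ)
  · rw [indicator_of_mem hx, ← ofReal_norm]
    refine ENNReal.ofReal_le_ofReal ?_
    have h := norm_fderiv_le_of_lipschitz ℝ (lipschitzWith_annularCutoff a hρ) (x₀ := x)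
    rwa [Real.coe_toNNReal _ (by positivity)] at h
  · have hconst : annularCutoff a ρ =ᶠ[𝓝 x] fun _ => 1 := by
      filter_upwards [isClosed_closedBall.isOpen_compl.mem_nhds hx] with y hy
      exact annularCutoff_eq_one hρ (not_le.1 (mt mem_closedBall.2 hy)).le
    have hzero : fderiv ℝ (annularCutoff a ρ) x = 0 := by
      rw [hconst.fderiv_eq, fderiv_fun_const, Pi.zero_apply]
    rw [← ofReal_norm, hzero, norm_zero, ENNReal.ofReal_zero]
    exact zero_le

lemma enorm_fderiv_ballCutoff_le {E : Type*} [NormedAddCommGroup E] [NormedSpace ℝ E]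
    (a x : E) {ρ : ℝ} (hρ : 0 < ρ) :
    ‖fderiv ℝ (ballCutoff a ρ) x‖ₑ ≤
      (closedBall a (2 * ρ)).indicator (fun _ => ENNReal.ofReal ρ⁻¹) x := by
  have h : fderiv ℝ (ballCutoff a ρ) x = -fderiv ℝ (annularCutoff a ρ) x := fderiv_const_sub _
  rw [h, enorm_neg]
  exact enorm_fderiv_annularCutoff_le a x hρ

end Cutoff

section Mazya

lemma ofReal_capP_le_lintegral {n : ℕ} {p : ℝ} (hp : 0 ≤ p) {K O : Set (En n)} {f : En n → ℝ}
    (hf : f ∈ Adm K O 1) : ENNReal.ofReal (capP p K O) ≤ ∫⁻ x in O, ‖fderiv ℝ f x‖ₑ ^ p := by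
  have hnonneg (v : En n → ℝ) : 0 ≤ ∫ x in O, gnorm v x ^ p :=
    integral_nonneg fun x => Real.rpow_nonneg (norm_nonneg _) p
  have hle : capP p K O ≤ ∫ x in O, gnorm f x ^ p :=
    csInf_le ⟨0, by rintro _ ⟨v, -, rfl⟩; exact hnonneg v⟩ ⟨f, hf, rfl⟩
  calc ENNReal.ofReal (capP p K O) ≤ ENNReal.ofReal (∫ x in O, gnorm f x ^ p) :=
        ENNReal.ofReal_le_ofReal hle
    _ ≤ ∫⁻ x in O, ‖gnorm f x ^ p‖ₑ := by
        rw [← Real.enorm_of_nonneg (hnonneg f)]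
        exact enorm_integral_le_lintegral_enorm _
    _ = ∫⁻ x in O, ‖fderiv ℝ f x‖ₑ ^ p := by
        simp only [gnorm, Real.enorm_rpow_of_nonneg (norm_nonneg _) hp, enorm_norm]

lemma mul_cutoff_mem_adm {n : ℕ} {K : Set (En n)} (hK : K ⊆ closedBall 0 (1 / 2))
    {f : En n → ℝ} (hf : LocallyLipschitz f) (hfK : ∀ x ∈ K, f x = 1) :
    (fun x => f x * ballCutoff 0 (1 / 2) x) ∈ Adm K (ball 0 1) 1 := by
  have hζ : LocallyLipschitz (ballCutoff (0 : En n) (1 / 2)) :=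
    locallyLipschitz_ballCutoff 0 one_half_pos
  refine ⟨?_, fun x hx => ?_, fun x hx => ?_⟩
  · rw [closure_ball _ one_ne_zero]
    exact (locallyLipschitz_mul hf hζ).locallyLipschitzOn.exists_lipschitzOnWith_of_compact
      (isCompact_closedBall _ _)
  · beta_reduce
    rw [hfK x hx, ballCutoff_eq_one one_half_pos (hK hx), mul_one]
  · rw [frontier_ball _ one_ne_zero, mem_sphere] at hx
    beta_reduce
    rw [ballCutoff_eq_zero one_half_pos (by rw [hx]; norm_num), mul_zero]

lemma ofReal_capP_mul_enorm_rpow_le {n : ℕ} {p : ℝ} (hp : 1 ≤ p) {K : Set (En n)}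
    (hK : K ⊆ closedBall 0 (1 / 2)) {u : En n → ℝ} (hu : LocallyLipschitz u)
    (huK : ∀ x ∈ K, u x = 0) (m : ℝ) :
    ENNReal.ofReal (capP p K (ball 0 1)) * ‖m‖ₑ ^ p ≤
      2 ^ (p - 1) * ((∫⁻ x in ball 0 1, ‖fderiv ℝ u x‖ₑ ^ p) +
        2 ^ p * ∫⁻ x in ball 0 1, ‖u x - m‖ₑ ^ p) := by
  have hp0 : 0 < p := by linarith
  rcases eq_or_ne m 0 with rfl | hm
  · simp [ENNReal.zero_rpow_of_pos hp0]
  set ζ : En n → ℝ := ballCutoff 0 (1 / 2)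
  have hζL : LocallyLipschitz ζ := locallyLipschitz_ballCutoff 0 one_half_pos
  have huL : LocallyLipschitz fun x => 1 - u x * m⁻¹ :=
    (LocallyLipschitz.const 1).sub (locallyLipschitz_mul hu (LocallyLipschitz.const m⁻¹))
  have hcap := ofReal_capP_le_lintegral hp0.le (p := p)
    (mul_cutoff_mem_adm hK huL fun x hx => by simp [huK x hx])
  have hgrad : ∀ᵐ x : En n, ‖m‖ₑ ^ p * ‖fderiv ℝ (fun y => (1 - u y * m⁻¹) * ζ y) x‖ₑ ^ p ≤
      2 ^ (p - 1) * (‖fderiv ℝ u x‖ₑ ^ p + 2 ^ p * ‖u x - m‖ₑ ^ p) := by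
    filter_upwards [ae_differentiableAt_of_locallyLipschitz hu,
      ae_differentiableAt_of_locallyLipschitz hζL] with x hux hζx
    have hscale : m • fderiv ℝ (fun y => (1 - u y * m⁻¹) * ζ y) x =
        fderiv ℝ (fun y => (m - u y) * ζ y) x := by
      rw [← fderiv_const_smul (((hux.mul_const _).const_sub _).fun_mul hζx)]
      congr 1
      ext y
      simp only [Pi.smul_apply, smul_eq_mul]
      field_simp
    have hζ2 : ‖fderiv ℝ ζ x‖ₑ ≤ 2 := by
      refine (enorm_fderiv_ballCutoff_le 0 x one_half_pos).trans
        ((indicator_le_self _ _ _).trans_eq ?_)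
      rw [one_div, inv_inv, ENNReal.ofReal_ofNat]
    rw [← ENNReal.mul_rpow_of_nonneg _ _ hp0.le, ← enorm_smul, hscale,
      ← ENNReal.mul_rpow_of_nonneg _ _ hp0.le]
    refine le_trans ?_ (ENNReal.rpow_add_le_mul_rpow_add_rpow _ _ hp)
    gcongr
    refine (enorm_fderiv_mul_le (hux.const_sub m) hζx).trans ?_
    rw [fderiv_const_sub, enorm_neg, add_comm, enorm_sub_rev m, mul_comm 2]
    gcongr
    exact mul_le_of_le_one_left' enorm_ballCutoff_le_one
  calc ENNReal.ofReal (capP p K (ball 0 1)) * ‖m‖ₑ ^ p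
      ≤ ∫⁻ x in ball 0 1, ‖m‖ₑ ^ p * ‖fderiv ℝ (fun y => (1 - u y * m⁻¹) * ζ y) x‖ₑ ^ p := by
        rw [lintegral_const_mul' _ _ (by finiteness), mul_comm]
        gcongr
    _ ≤ ∫⁻ x in ball 0 1, 2 ^ (p - 1) * (‖fderiv ℝ u x‖ₑ ^ p + 2 ^ p * ‖u x - m‖ₑ ^ p) :=
        lintegral_mono_ae (ae_restrict_of_ae hgrad)
    _ = _ := by
        rw [lintegral_const_mul' _ _ (by finiteness),
          lintegral_add_left ((measurable_fderiv ℝ u).enorm.pow_const p),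
          lintegral_const_mul' _ _ (by finiteness)]

lemma exists_mazya_unit_ball (n : ℕ) {p c : ℝ} (hp : 1 < p) (hc : 0 < c) :
    ∃ C : ℝ≥0, ∀ K : Set (En n), K ⊆ closedBall 0 (1 / 2) → c ≤ capP p K (ball 0 1) →
      ∀ u : En n → ℝ, LocallyLipschitz u → (∀ x ∈ K, u x = 0) →
      ∫⁻ y in ball 0 1, ‖u y‖ₑ ^ p ≤ C * ∫⁻ x in ball 0 3, ‖fderiv ℝ u x‖ₑ ^ p := by
  obtain ⟨A, hpoincare⟩ := exists_poincare (volume : Measure (En n)) hp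
  have hc' : ENNReal.ofReal c ≠ 0 := by simpa using hc
  set B : ℝ≥0∞ := (ENNReal.ofReal c)⁻¹ * (2 ^ (p - 1) * (1 + 2 ^ p * A)) with hB
  have hC : 2 ^ (p - 1) * (A + B * volume (ball (0 : En n) 1)) ≠ ∞ := by
    have := ENNReal.inv_ne_top.2 hc'
    finiteness
  lift 2 ^ (p - 1) * (A + B * volume (ball (0 : En n) 1)) to ℝ≥0 using hC with C hCeq
  refine ⟨C, fun K hK hcap u hu huK => ?_⟩
  obtain ⟨m, hm⟩ := hpoincare u hu
  set I := ∫⁻ x in ball 0 3, ‖fderiv ℝ u x‖ₑ ^ p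
  have hmI : ‖m‖ₑ ^ p ≤ B * I := by
    rw [hB, mul_assoc, ← ENNReal.div_eq_inv_mul,
      ENNReal.le_div_iff_mul_le (.inl hc') (.inl ENNReal.ofReal_ne_top), mul_comm]
    calc ENNReal.ofReal c * ‖m‖ₑ ^ p
        ≤ ENNReal.ofReal (capP p K (ball 0 1)) * ‖m‖ₑ ^ p := by gcongr
      _ ≤ 2 ^ (p - 1) * (I + 2 ^ p * (A * I)) := by
          refine (ofReal_capP_mul_enorm_rpow_le hp.le hK hu huK m).trans ?_
          gcongr
          exact lintegral_mono_set (ball_subset_ball (by norm_num))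
      _ = 2 ^ (p - 1) * (1 + 2 ^ p * A) * I := by ring
  calc ∫⁻ y in ball 0 1, ‖u y‖ₑ ^ p
      ≤ ∫⁻ y in ball 0 1, 2 ^ (p - 1) * (‖u y - m‖ₑ ^ p + ‖m‖ₑ ^ p) := by
        refine lintegral_mono fun y => le_trans ?_ (ENNReal.rpow_add_le_mul_rpow_add_rpow _ _ hp.le)
        gcongr
        simpa using enorm_add_le (u y - m) m
    _ = 2 ^ (p - 1) * ((∫⁻ y in ball 0 1, ‖u y - m‖ₑ ^ p) +
          ‖m‖ₑ ^ p * volume (ball (0 : En n) 1)) := by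
        rw [lintegral_const_mul' _ _ (by finiteness), lintegral_add_right _ measurable_const,
          setLIntegral_const]
    _ ≤ 2 ^ (p - 1) * (A * I + B * I * volume (ball (0 : En n) 1)) := by gcongr
    _ = C * I := by
        rw [hCeq]
        ring

end Mazya

section Scaling

variable {E : Type*} [NormedAddCommGroup E] [NormedSpace ℝ E]

lemma enorm_fderiv_comp_add_smul (u : E → ℝ) (z : E) (r : ℝ) (x : E) :
    ‖fderiv ℝ (fun y => u (z + r • y)) x‖ₑ = ‖r‖ₑ * ‖fderiv ℝ u (z + r • x)‖ₑ := by
  rw [fderiv_comp_smul (f := fun y => u (z + y)), fderiv_comp_add_left, enorm_smul]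

variable [MeasurableSpace E] [BorelSpace E] [FiniteDimensional ℝ E]

lemma setLIntegral_ball_comp_add_smul (μ : Measure E) [μ.IsAddHaarMeasure] (z : E) {r : ℝ}
    (hr : 0 < r) (a : ℝ) (f : E → ℝ≥0∞) :
    ∫⁻ x in ball 0 a, f (z + r • x) ∂μ =
      ENNReal.ofReal (r ^ Module.finrank ℝ E)⁻¹ * ∫⁻ y in ball z (r * a), f y ∂μ := by
  have hball : (fun x => z + r • x) ⁻¹' ball z (r * a) = ball 0 a := by
    ext x
    rw [mem_preimage, mem_ball_iff_norm, add_sub_cancel_left, norm_smul, Real.norm_of_nonneg hr.le,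
      mul_lt_mul_iff_right₀ hr, mem_ball_zero_iff]
  have hemb : MeasurableEmbedding fun x : E => z + r • x :=
    (measurableEmbedding_addLeft z).comp
      (Homeomorph.smulOfNeZero (α := E) r hr.ne').measurableEmbedding
  have hmap : μ.map (fun x => z + r • x) = ENNReal.ofReal (r ^ Module.finrank ℝ E)⁻¹ • μ := by
    have hcomp : (fun x => z + r • x) = (z + ·) ∘ (r • ·) := rfl
    rw [hcomp, ← Measure.map_map (by fun_prop) (by fun_prop), Measure.map_addHaar_smul μ hr.ne',
      Measure.map_smul, map_add_left_eq_self, abs_of_pos (by positivity)]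
  rw [← hball, ← hemb.lintegral_map (μ := μ.restrict _), ← hemb.restrict_map, hmap,
    setLIntegral_smul_measure, smul_eq_mul]

/-- Fubini on the set of pairs at distance less than `r`. -/
lemma lintegral_setLIntegral_ball (μ : Measure E) [μ.IsAddHaarMeasure] (r : ℝ) {f : E → ℝ≥0∞}
    (hf : Measurable f) :
    ∫⁻ a, ∫⁻ y in ball a r, f y ∂μ ∂μ = μ (ball 0 r) * ∫⁻ y, f y ∂μ := by
  have hsymm (a y : E) : (ball a r).indicator f y = (ball y r).indicator (fun _ => f y) a := by
    by_cases h : y ∈ ball a r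
    · rw [indicator_of_mem h, indicator_of_mem (mem_ball_comm.1 h)]
    · rw [indicator_of_notMem h, indicator_of_notMem (mt mem_ball_comm.1 h)]
  have hmeas : Measurable fun z : E × E => (ball z.1 r).indicator f z.2 :=
    (hf.comp measurable_snd).indicator (s := {z : E × E | dist z.2 z.1 < r})
      (measurableSet_lt (by fun_prop) measurable_const)
  simp_rw [← lintegral_indicator (measurableSet_ball (α := E))]
  rw [lintegral_lintegral_swap hmeas.aemeasurable]
  simp_rw [hsymm, lintegral_indicator_const (measurableSet_ball (α := E)),
    Measure.addHaar_ball_center μ]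
  rw [lintegral_mul_const _ hf, mul_comm]

lemma lintegral_le_of_forall_setLIntegral_ball_le (μ : Measure E) [μ.IsAddHaarMeasure]
    {f g : E → ℝ≥0∞} (hf : Measurable f) (hg : Measurable g) {A : ℝ≥0∞} (hA : A ≠ ∞) {k t : ℝ}
    (hk : 0 < k) (ht : 0 < t)
    (h : ∀ a, ∫⁻ y in ball a t, f y ∂μ ≤ A * ∫⁻ y in ball a (k * t), g y ∂μ) :
    ∫⁻ y, f y ∂μ ≤ ENNReal.ofReal (k ^ Module.finrank ℝ E) * A * ∫⁻ y, g y ∂μ := by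
  have hint := lintegral_mono (μ := μ) h
  rw [lintegral_setLIntegral_ball μ t hf, lintegral_const_mul' _ _ hA,
    lintegral_setLIntegral_ball μ _ hg, Measure.addHaar_ball_mul_of_pos μ 0 hk] at hint
  refine (ENNReal.mul_le_mul_iff_right (measure_ball_pos μ 0 ht).ne' measure_ball_lt_top.ne).1 ?_
  exact hint.trans_eq (by ring)

end Scaling

section MazyaNeighborhood

variable (n : ℕ) {p c : ℝ}

lemma exists_mazya_ball (hp : 1 < p) (hc : 0 < c) :
    ∃ C : ℝ≥0, ∀ (F : Set (En n)) (z : En n) (r : ℝ), 0 < r →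
      c ≤ capP p (shiftedSet F z r) (ball 0 1) →
      ∀ u : En n → ℝ, LocallyLipschitz u → (∀ x ∈ F, u x = 0) →
      ∫⁻ y in ball z r, ‖u y‖ₑ ^ p ≤
        C * ENNReal.ofReal r ^ p * ∫⁻ x in ball z (3 * r), ‖fderiv ℝ u x‖ₑ ^ p := by
  obtain ⟨C, hunit⟩ := exists_mazya_unit_ball n hp hc
  refine ⟨C, fun F z r hr hcap u hu huF => ?_⟩
  have hp0 : 0 ≤ p := by linarith
  have hline : LocallyLipschitz fun x : En n => z + r • x :=
    ContDiff.locallyLipschitz (𝕂 := ℝ) (by fun_prop)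
  have h := hunit _ (fun x hx => hx.1) hcap (fun x => u (z + r • x)) (hu.comp hline)
    fun x hx => huF _ hx.2
  simp_rw [enorm_fderiv_comp_add_smul, ENNReal.mul_rpow_of_nonneg _ _ hp0] at h
  rw [lintegral_const_mul' _ _ (by finiteness),
    setLIntegral_ball_comp_add_smul volume z hr 1 fun y => ‖u y‖ₑ ^ p,
    setLIntegral_ball_comp_add_smul volume z hr 3 fun y => ‖fderiv ℝ u y‖ₑ ^ p, mul_one,
    mul_comm r 3, Real.enorm_of_nonneg hr.le] at h
  have hr0 : ENNReal.ofReal (r ^ Module.finrank ℝ (En n))⁻¹ ≠ 0 := by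
    rw [ne_eq, ENNReal.ofReal_eq_zero, not_le]
    positivity
  refine (ENNReal.mul_le_mul_iff_right hr0 ENNReal.ofReal_ne_top).1 (h.trans_eq ?_)
  ring

lemma exists_mazya_near_fat_set (hp : 1 < p) (hc : 0 < c) :
    ∃ C : ℝ≥0, ∀ (F : Set (En n)) (N t R : ℝ), 0 < t → 3 * t < R → F.Nonempty →
      LocUnifPFatAt p F (F ∩ closedBall 0 (N + t)) c R →
      ∀ u : En n → ℝ, LocallyLipschitz u → (∀ x ∈ F, u x = 0) → (∀ x, N < ‖x‖ → u x = 0) →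
      ∀ a, ∫⁻ y in ball a t, {y | infDist y F < t}.indicator (fun y => ‖u y‖ₑ ^ p) y ≤
        C * ENNReal.ofReal t ^ p *
          ∫⁻ y in ball a (11 * t),
            {y | infDist y F < 9 * t}.indicator (fun y => ‖fderiv ℝ u y‖ₑ ^ p) y := by
  obtain ⟨C, hmazya⟩ := exists_mazya_ball n hp hc
  have hp0 : 0 ≤ p := by linarith
  refine ⟨C * 3 ^ p, fun F N t R ht hR hF hfat u hu huF huN a => ?_⟩
  by_cases hne : ∃ y ∈ ball a t, infDist y F < t ∧ u y ≠ 0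
  · obtain ⟨y, hya, hyF, huy⟩ := hne
    obtain ⟨z, hz, hyz⟩ := (infDist_lt_iff hF).1 hyF
    have hyN : ‖y‖ ≤ N := not_lt.1 fun hlt => huy (huN y hlt)
    have hzN : z ∈ closedBall (0 : En n) (N + t) := by
      rw [dist_comm, dist_eq_norm] at hyz
      rw [mem_closedBall_zero_iff]
      linarith [norm_le_norm_add_norm_sub' z y]
    rw [mem_ball] at hya
    have hsub : ball a t ⊆ ball z (3 * t) :=
      ball_subset_ball' (by linarith [dist_triangle_left a z y])
    have hsub' : ball z (3 * (3 * t)) ⊆ ball a (11 * t) :=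
      ball_subset_ball' (by linarith [dist_triangle_left z a y])
    calc ∫⁻ y in ball a t, {y | infDist y F < t}.indicator (fun y => ‖u y‖ₑ ^ p) y
        ≤ ∫⁻ y in ball z (3 * t), ‖u y‖ₑ ^ p :=
          (lintegral_mono_set hsub).trans (lintegral_mono fun y => indicator_le_self _ _ _)
      _ ≤ C * ENNReal.ofReal (3 * t) ^ p * ∫⁻ y in ball z (3 * (3 * t)), ‖fderiv ℝ u y‖ₑ ^ p :=
          hmazya F z (3 * t) (by positivity) (hfat z ⟨hz, hzN⟩ _ (by positivity) hR) u hu huF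
      _ ≤ C * ENNReal.ofReal (3 * t) ^ p * ∫⁻ y in ball a (11 * t),
            {y | infDist y F < 9 * t}.indicator (fun y => ‖fderiv ℝ u y‖ₑ ^ p) y := by
          refine mul_le_mul_right ?_ _
          refine le_trans ?_ (lintegral_mono_set hsub')
          refine setLIntegral_mono' measurableSet_ball fun x hx => ?_
          have hxF : x ∈ {y | infDist y F < 9 * t} :=
            (infDist_le_dist_of_mem hz).trans_lt (by linarith [mem_ball.1 hx])
          rw [indicator_of_mem hxF]
      _ = _ := by
          rw [ENNReal.ofReal_mul (by norm_num), ENNReal.mul_rpow_of_nonneg _ _ hp0,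
            ENNReal.ofReal_ofNat, ENNReal.coe_mul, ENNReal.coe_rpow_of_nonneg _ hp0,
            ENNReal.coe_ofNat, ← mul_assoc (C : ℝ≥0∞)]
  · push Not at hne
    refine le_of_eq_of_le ?_ zero_le
    refine setLIntegral_eq_zero measurableSet_ball fun y hy => ?_
    refine indicator_apply_eq_zero.2 fun hyF => ?_
    simp [hne y hy hyF, ENNReal.zero_rpow_of_pos (by linarith : 0 < p)]

lemma exists_mazya_thickening (hp : 1 < p) (hc : 0 < c) :
    ∃ C : ℝ≥0, ∀ (F : Set (En n)) (N t R : ℝ), 0 < t → 3 * t < R → F.Nonempty →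
      LocUnifPFatAt p F (F ∩ closedBall 0 (N + t)) c R →
      ∀ u : En n → ℝ, LocallyLipschitz u → (∀ x ∈ F, u x = 0) → (∀ x, N < ‖x‖ → u x = 0) →
      ∫⁻ y in {y | infDist y F < t}, ‖u y‖ₑ ^ p ≤
        C * ENNReal.ofReal t ^ p * ∫⁻ x in {x | infDist x F < 9 * t}, ‖fderiv ℝ u x‖ₑ ^ p := by
  obtain ⟨C, hnear⟩ := exists_mazya_near_fat_set n hp hc
  have : 0 ≤ p := by linarith
  refine ⟨11 ^ n * C, fun F N t R ht hR hF hfat u hu huF huN => ?_⟩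
  have hset (s : ℝ) : MeasurableSet {y : En n | infDist y F < s} :=
    measurableSet_lt (continuous_infDist_pt F).measurable measurable_const
  have huc := hu.continuous
  rw [← lintegral_indicator (hset _), ← lintegral_indicator (hset _)]
  have h := lintegral_le_of_forall_setLIntegral_ball_le volume
    (Measurable.indicator (by fun_prop) (hset t))
    (((measurable_fderiv ℝ u).enorm.pow_const p).indicator (hset (9 * t))) (by finiteness)
    (by norm_num) ht (hnear F N t R ht hR hF hfat u hu huF huN)
  refine h.trans_eq ?_
  rw [finrank_euclideanSpace_fin, ENNReal.ofReal_pow (by norm_num), ENNReal.ofReal_ofNat]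
  push_cast
  ring

end MazyaNeighborhood

section LayerCake

lemma lintegral_mul_lintegral_Ioi {α : Type*} [MeasurableSpace α] {μ : Measure α} [SFinite μ]
    {f : α → ℝ≥0∞} {k : ℝ → ℝ≥0∞} {D : α → ℝ} (hf : Measurable f) (hk : Measurable k)
    (hD : Measurable D) :
    ∫⁻ y, f y * (∫⁻ t in Ioi (D y), k t) ∂μ = ∫⁻ t, k t * ∫⁻ y in {y | D y < t}, f y ∂μ := by
  have hsub : ∀ t, MeasurableSet {y | D y < t} := fun t => measurableSet_lt hD measurable_const
  let φ : α × ℝ → ℝ≥0∞ := {z | D z.1 < z.2}.indicator fun z => f z.1 * k z.2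
  have hleft : ∀ y, f y * ∫⁻ t in Ioi (D y), k t = ∫⁻ t, φ (y, t) := fun y => by
    rw [← lintegral_indicator measurableSet_Ioi,
      ← lintegral_const_mul _ (hk.indicator measurableSet_Ioi)]
    refine lintegral_congr fun t => ?_
    by_cases h : D y < t <;> simp [φ, indicator, h]
  have hright : ∀ t, k t * ∫⁻ y in {y | D y < t}, f y ∂μ = ∫⁻ y, φ (y, t) ∂μ := fun t => by
    rw [← lintegral_indicator (hsub t), ← lintegral_const_mul _ (hf.indicator (hsub t))]
    refine lintegral_congr fun y => ?_
    by_cases h : D y < t <;> simp [φ, indicator, h, mul_comm]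
  simp_rw [hleft, hright]
  exact lintegral_lintegral_swap (Measurable.indicator (by fun_prop)
    (measurableSet_lt (by fun_prop) measurable_snd)).aemeasurable

lemma rpow_neg_le_lintegral_Ioc {d a : ℝ} (hd : 0 < d) (ha : 0 ≤ a) :
    ENNReal.ofReal d ^ (-a) ≤
      2 ^ (a + 1) * ∫⁻ t in Ioc d (2 * d), ENNReal.ofReal t ^ (-a - 1) := by
  have hscale : 2 ^ (a + 1) * ((2 * d) ^ (-a - 1) * d) = d ^ (-a) := by
    rw [Real.mul_rpow zero_le_two hd.le, ← neg_add', Real.rpow_neg zero_le_two, neg_add',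
      Real.rpow_sub_one hd.ne']
    field_simp
  calc ENNReal.ofReal d ^ (-a)
      = 2 ^ (a + 1) * ∫⁻ _ in Ioc d (2 * d), ENNReal.ofReal (2 * d) ^ (-a - 1) := by
        rw [setLIntegral_const, Real.volume_Ioc, two_mul, add_sub_cancel_right, ← two_mul,
          ENNReal.ofReal_rpow_of_pos hd, ENNReal.ofReal_rpow_of_pos (by positivity),
          ← ENNReal.ofReal_mul (by positivity), ← ENNReal.ofReal_ofNat,
          ENNReal.ofReal_rpow_of_pos two_pos, ← ENNReal.ofReal_mul (by positivity), hscale]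
    _ ≤ _ := by
        refine mul_le_mul_right (setLIntegral_mono' measurableSet_Ioc fun t ht => ?_) _
        have htd : 0 < t := hd.trans ht.1
        rw [ENNReal.ofReal_rpow_of_pos (by positivity), ENNReal.ofReal_rpow_of_pos htd]
        exact ENNReal.ofReal_le_ofReal <|
          Real.rpow_le_rpow_of_nonpos htd ht.2 (by linarith)

lemma rpow_neg_le_lintegral_Ioi_indicator {d a T : ℝ} (hd : 0 < d) (ha : 0 ≤ a) (hT : 2 * d < T) :
    ENNReal.ofReal d ^ (-a) ≤ 2 ^ (a + 1) *
      ∫⁻ t in Ioi d, (Ioo 0 T).indicator (fun t => ENNReal.ofReal t ^ (-a - 1)) t := by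
  refine (rpow_neg_le_lintegral_Ioc hd ha).trans (mul_le_mul_right ?_ _)
  refine le_trans ?_ (lintegral_mono_set (Ioc_subset_Ioi_self : Ioc d (2 * d) ⊆ Ioi d))
  refine setLIntegral_mono' measurableSet_Ioc fun t ht => ?_
  rw [indicator_of_mem (mem_Ioo.2 ⟨hd.trans ht.1, ht.2.trans_lt hT⟩)]

lemma ofReal_mul_lintegral_Ioi_rpow {d τ : ℝ} (hd : 0 < d) (hτ : 0 < τ) :
    ENNReal.ofReal τ * ∫⁻ t in Ioi d, ENNReal.ofReal t ^ (-τ - 1) = ENNReal.ofReal d ^ (-τ) := by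
  have hpos : ∀ t ∈ Ioi d, 0 < t := fun t ht => hd.trans ht
  rw [setLIntegral_congr_fun measurableSet_Ioi fun t ht => ENNReal.ofReal_rpow_of_pos (hpos t ht),
    ← ofReal_integral_eq_lintegral_ofReal (integrableOn_Ioi_rpow_of_lt (by linarith) hd),
    integral_Ioi_rpow_of_lt (by linarith) hd, ← ENNReal.ofReal_mul hτ.le,
    ENNReal.ofReal_rpow_of_pos hd]
  · congr 1
    rw [sub_add_cancel, neg_div_neg_eq, mul_div_cancel₀ _ hτ.ne']
  · filter_upwards [ae_restrict_mem measurableSet_Ioi] with t ht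
    exact Real.rpow_nonneg (hpos t ht).le _

lemma ofReal_mul_lintegral_Ioi_div_rpow {d κ τ : ℝ} (hd : 0 < d) (hκ : 0 < κ) (hτ : 0 < τ) :
    ENNReal.ofReal τ *
        ∫⁻ t in Ioi (d / κ), (Ioi 0).indicator (fun t => ENNReal.ofReal t ^ (-τ - 1)) t =
      ENNReal.ofReal κ ^ τ * ENNReal.ofReal d ^ (-τ) := by
  have hdκ : 0 < d / κ := div_pos hd hκ
  rw [setLIntegral_congr_fun measurableSet_Ioi fun t ht =>
      indicator_of_mem (mem_Ioi.2 (hdκ.trans ht)) _,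
    ofReal_mul_lintegral_Ioi_rpow hdκ hτ, ENNReal.ofReal_div_of_pos hκ, div_eq_mul_inv,
    ENNReal.mul_rpow_of_ne_top ENNReal.ofReal_ne_top
      (ENNReal.inv_ne_top.2 (ENNReal.ofReal_pos.2 hκ).ne'),
    ENNReal.inv_rpow, ENNReal.rpow_neg _ τ, ENNReal.rpow_neg _ τ, inv_inv, mul_comm]

/- Integrate the hypothesis against `t ^ (-(p + τ) - 1) dt` and exchange the integrals. -/
lemma ofReal_mul_lintegral_mul_rpow_neg_le {α : Type*} [MeasurableSpace α] {μ : Measure α}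
    [SFinite μ] {f g : α → ℝ≥0∞} {D : α → ℝ} {C : ℝ≥0∞} {p τ κ T : ℝ} (hf : Measurable f)
    (hg : Measurable g) (hD : Measurable D) (hDpos : ∀ y, 0 < D y)
    (hfT : ∀ y, f y ≠ 0 → 2 * D y < T) (hC : C ≠ ∞) (hp : 0 ≤ p) (hτ : 0 < τ) (hκ : 0 < κ)
    (h : ∀ t, 0 < t → t < T → ∫⁻ y in {y | D y < t}, f y ∂μ ≤
      C * ENNReal.ofReal t ^ p * ∫⁻ y in {y | D y < κ * t}, g y ∂μ) :
    ENNReal.ofReal τ * ∫⁻ y, f y * ENNReal.ofReal (D y) ^ (-(p + τ)) ∂μ ≤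
      2 ^ (p + τ + 1) * C * ENNReal.ofReal κ ^ τ *
        ∫⁻ y, g y * ENNReal.ofReal (D y) ^ (-τ) ∂μ := by
  let k₁ : ℝ → ℝ≥0∞ := (Ioo 0 T).indicator fun t => ENNReal.ofReal t ^ (-(p + τ) - 1)
  let k₂ : ℝ → ℝ≥0∞ := (Ioi 0).indicator fun t => ENNReal.ofReal t ^ (-τ - 1)
  have hf_le : ∀ y, f y * ENNReal.ofReal (D y) ^ (-(p + τ)) ≤
      2 ^ (p + τ + 1) * (f y * ∫⁻ t in Ioi (D y), k₁ t) := fun y => by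
    rcases eq_or_ne (f y) 0 with hy | hy
    · simp only [hy, zero_mul, mul_zero, le_refl]
    rw [mul_left_comm]
    exact mul_le_mul_right
      (rpow_neg_le_lintegral_Ioi_indicator (hDpos y) (by positivity) (hfT y hy)) _
  have hlevel : ∀ t, k₁ t * ∫⁻ y in {y | D y < t}, f y ∂μ ≤
      C * (k₂ t * ∫⁻ y in {y | D y / κ < t}, g y ∂μ) := fun t => by
    by_cases ht : t ∈ Ioo 0 T
    swap
    · simp only [k₁, indicator_of_notMem ht, zero_mul, zero_le]
    have ht0 : ENNReal.ofReal t ≠ 0 := (ENNReal.ofReal_pos.2 ht.1).ne'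
    simp only [k₁, k₂, indicator_of_mem ht, indicator_of_mem (mem_Ioi.2 ht.1), div_lt_iff₀' hκ]
    refine (mul_le_mul_right (h t ht.1 ht.2) _).trans_eq ?_
    rw [show -τ - 1 = -(p + τ) - 1 + p by ring, ENNReal.rpow_add _ _ ht0 ENNReal.ofReal_ne_top]
    ring
  have hg_eq : ∀ y, ENNReal.ofReal τ * (g y * ∫⁻ t in Ioi (D y / κ), k₂ t) =
      ENNReal.ofReal κ ^ τ * (g y * ENNReal.ofReal (D y) ^ (-τ)) := fun y => by
    rw [mul_left_comm, ofReal_mul_lintegral_Ioi_div_rpow (hDpos y) hκ hτ, mul_left_comm]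
  have hk₁ : Measurable k₁ := Measurable.indicator (by fun_prop) measurableSet_Ioo
  have hk₂ : Measurable k₂ := Measurable.indicator (by fun_prop) measurableSet_Ioi
  calc ENNReal.ofReal τ * ∫⁻ y, f y * ENNReal.ofReal (D y) ^ (-(p + τ)) ∂μ
      ≤ ENNReal.ofReal τ * (2 ^ (p + τ + 1) * ∫⁻ y, f y * (∫⁻ t in Ioi (D y), k₁ t) ∂μ) := by
        rw [← lintegral_const_mul' (2 ^ (p + τ + 1)) _ (by finiteness)]
        exact mul_le_mul_right (lintegral_mono hf_le) _
    _ ≤ ENNReal.ofReal τ * (2 ^ (p + τ + 1) *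
          (C * ∫⁻ y, g y * (∫⁻ t in Ioi (D y / κ), k₂ t) ∂μ)) := by
        rw [lintegral_mul_lintegral_Ioi hf hk₁ hD,
          lintegral_mul_lintegral_Ioi hg hk₂ (hD.div_const κ), ← lintegral_const_mul' C _ hC]
        exact mul_le_mul_right (mul_le_mul_right (lintegral_mono hlevel) _) _
    _ = 2 ^ (p + τ + 1) * C *
          ∫⁻ y, ENNReal.ofReal τ * (g y * ∫⁻ t in Ioi (D y / κ), k₂ t) ∂μ := by
        rw [lintegral_const_mul' _ _ ENNReal.ofReal_ne_top]
        ring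
    _ = _ := by
        simp_rw [hg_eq]
        rw [lintegral_const_mul' _ _ (by finiteness), mul_assoc _ (_ ^ τ)]

end LayerCake

section WeightedHardy

/-- The distance to `F` raised by `δ`: a positive `1`-Lipschitz function with bounded negative
powers, used in place of the distance as a weight. -/
def regDist {X : Type*} [PseudoMetricSpace X] (F : Set X) (δ : ℝ) (x : X) : ℝ := infDist x F + δ

section Metric

variable {X : Type*} [PseudoMetricSpace X]

lemma le_regDist (F : Set X) (δ : ℝ) (x : X) : δ ≤ regDist F δ x :=
  le_add_of_nonneg_left infDist_nonneg

lemma regDist_pos (F : Set X) {δ : ℝ} (hδ : 0 < δ) (x : X) : 0 < regDist F δ x :=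
  hδ.trans_le (le_regDist F δ x)

lemma lipschitzWith_regDist (F : Set X) (δ : ℝ) : LipschitzWith 1 (regDist F δ) :=
  LipschitzWith.of_dist_le_mul fun x y => by
    simpa only [regDist, dist_add_right] using (lipschitz_infDist_pt F).dist_le_mul x y

lemma locallyLipschitz_rpow_const {D : X → ℝ} (hD : LocallyLipschitz D) (hpos : ∀ x, 0 < D x)
    (a : ℝ) : LocallyLipschitz fun x => D x ^ a := by
  intro x
  obtain ⟨K, t, ht, hK⟩ := (Real.contDiffAt_rpow_const_of_ne (p := a) (n := 1)
    (hpos x).ne').exists_lipschitzOnWith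
  obtain ⟨L, s, hs, hL⟩ := hD x
  exact ⟨K * L, s ∩ D ⁻¹' t, Filter.inter_mem hs (hD.continuous.continuousAt ht),
    hK.comp (hL.mono inter_subset_left) fun y hy => hy.2⟩

end Metric

lemma enorm_fderiv_mul_rpow_rpow_le {E : Type*} [NormedAddCommGroup E] [NormedSpace ℝ E]
    {V D : E → ℝ} {x : E} (hV : DifferentiableAt ℝ V x) (hD : DifferentiableAt ℝ D x)
    (hpos : 0 < D x) (hD1 : ‖fderiv ℝ D x‖ₑ ≤ 1) {a p : ℝ} (ha : 0 ≤ a) (hp : 1 ≤ p) :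
    ‖fderiv ℝ (fun y => V y * D y ^ a) x‖ₑ ^ p ≤
      2 ^ (p - 1) * (‖fderiv ℝ V x‖ₑ ^ p * ENNReal.ofReal (D x) ^ (a * p) +
        ENNReal.ofReal a ^ p * (‖V x‖ₑ ^ p * ENNReal.ofReal (D x) ^ (a * p - p))) := by
  have hp0 : 0 ≤ p := by linarith
  have hDa := hD.hasFDerivAt.rpow_const (p := a) (Or.inl hpos.ne')
  have hgrad : ‖fderiv ℝ (fun y => D y ^ a) x‖ₑ ≤
      ENNReal.ofReal a * ENNReal.ofReal (D x) ^ (a - 1) := by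
    rw [hDa.fderiv, enorm_smul, Real.enorm_of_nonneg (by positivity), ENNReal.ofReal_mul ha,
      ENNReal.ofReal_rpow_of_pos hpos]
    exact mul_le_of_le_one_right' hD1
  have hweight : ‖D x ^ a‖ₑ = ENNReal.ofReal (D x) ^ a := by
    rw [Real.enorm_of_nonneg (by positivity), ENNReal.ofReal_rpow_of_pos hpos]
  calc ‖fderiv ℝ (fun y => V y * D y ^ a) x‖ₑ ^ p
      ≤ (‖fderiv ℝ V x‖ₑ * ENNReal.ofReal (D x) ^ a +
          ENNReal.ofReal a * (‖V x‖ₑ * ENNReal.ofReal (D x) ^ (a - 1))) ^ p := by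
        refine ENNReal.rpow_le_rpow ((enorm_fderiv_mul_le hV hDa.differentiableAt).trans ?_) hp0
        rw [hweight, add_comm, mul_comm (_ ^ a), mul_left_comm]
        exact add_le_add_right (mul_le_mul_right hgrad _) _
    _ ≤ _ := ENNReal.rpow_add_le_mul_rpow_add_rpow _ _ hp
    _ = _ := by
        simp only [ENNReal.mul_rpow_of_nonneg _ _ hp0, ← ENNReal.rpow_mul, sub_mul, one_mul]

variable {n : ℕ} {p c : ℝ}

lemma enorm_fderiv_regDist_le (F : Set (En n)) (δ : ℝ) (x : En n) :
    ‖fderiv ℝ (regDist F δ) x‖ₑ ≤ 1 := by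
  rw [← ofReal_norm, ENNReal.ofReal_le_one]
  simpa using norm_fderiv_le_of_lipschitz ℝ (lipschitzWith_regDist F δ) (x₀ := x)

/-- The functions to which Hardy's inequality with weights `regDist F δ` is applied: they vanish on
`F` and outside `closedBall 0 N`, and `regDist F δ` is smaller than `T / 2` where they do not. -/
structure IsHardyTest (F : Set (En n)) (δ N T : ℝ) (W : En n → ℝ) : Prop where
  locallyLipschitz : LocallyLipschitz W
  eq_zero_of_mem : ∀ x ∈ F, W x = 0
  eq_zero_of_lt_norm : ∀ x, N < ‖x‖ → W x = 0
  two_mul_regDist_lt : ∀ x, W x ≠ 0 → 2 * regDist F δ x < T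

lemma IsHardyTest.mul_regDist_rpow {F : Set (En n)} {δ N T : ℝ} {V : En n → ℝ}
    (hV : IsHardyTest F δ N T V) (hδ : 0 < δ) (a : ℝ) :
    IsHardyTest F δ N T fun x => V x * regDist F δ x ^ a where
  locallyLipschitz := locallyLipschitz_mul hV.locallyLipschitz <|
    locallyLipschitz_rpow_const (lipschitzWith_regDist F δ).locallyLipschitz (regDist_pos F hδ) a
  eq_zero_of_mem x hx := mul_eq_zero_of_left (hV.eq_zero_of_mem x hx) _
  eq_zero_of_lt_norm x hx := mul_eq_zero_of_left (hV.eq_zero_of_lt_norm x hx) _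
  two_mul_regDist_lt x hx := hV.two_mul_regDist_lt x (left_ne_zero_of_mul hx)

lemma exists_weighted_hardy (n : ℕ) (hp : 1 < p) (hc : 0 < c) :
    ∃ C : ℝ≥0, ∀ (F : Set (En n)) (δ N T τ : ℝ), 0 < δ → 0 < τ → τ ≤ 1 → F.Nonempty →
      LocUnifPFatAt p F (F ∩ closedBall 0 (N + T)) c (3 * T) → ∀ W, IsHardyTest F δ N T W →
      ENNReal.ofReal τ * ∫⁻ x, ‖W x‖ₑ ^ p * ENNReal.ofReal (regDist F δ x) ^ (-(p + τ)) ≤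
        C * ∫⁻ x, ‖fderiv ℝ W x‖ₑ ^ p * ENNReal.ofReal (regDist F δ x) ^ (-τ) := by
  obtain ⟨C, hthick⟩ := exists_mazya_thickening n hp hc
  refine ⟨2 ^ (p + 2) * C * 10, fun F δ N T τ hδ hτ hτ1 hF hfat W hW => ?_⟩
  have hp0 : 0 < p := by linarith
  have hWm := hW.locallyLipschitz.continuous.measurable
  have hDm := (lipschitzWith_regDist F δ).continuous.measurable
  refine (ofReal_mul_lintegral_mul_rpow_neg_le (f := fun x => ‖W x‖ₑ ^ p)
    (g := fun x => ‖fderiv ℝ W x‖ₑ ^ p) (κ := 10) (by fun_prop) (by fun_prop) hDm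
    (regDist_pos F hδ) (fun y hy => hW.two_mul_regDist_lt y fun h => hy ?_)
    (ENNReal.coe_ne_top (r := C)) hp0.le hτ (by norm_num) fun t ht htT => ?_).trans ?_
  · rw [h, enorm_zero, ENNReal.zero_rpow_of_pos hp0]
  · rcases le_or_gt t δ with htδ | hδt
    · have hempty : {y | regDist F δ y < t} = ∅ :=
        eq_empty_of_forall_notMem fun y => (htδ.trans (le_regDist F δ y)).not_gt
      simp only [hempty, Measure.restrict_empty, lintegral_zero_measure, zero_le]
    have hfat' : LocUnifPFatAt p F (F ∩ closedBall 0 (N + t)) c (3 * T) := fun z hz =>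
      hfat z ⟨hz.1, closedBall_subset_closedBall (by linarith) hz.2⟩
    refine (lintegral_mono_set fun y (hy : regDist F δ y < t) => ?_).trans
      ((hthick F N t _ ht (by linarith) hF hfat' W hW.locallyLipschitz
        hW.eq_zero_of_mem hW.eq_zero_of_lt_norm).trans
        (mul_le_mul_right (lintegral_mono_set fun y (hy : infDist y F < 9 * t) => ?_) _))
    · exact (le_add_of_nonneg_right hδ.le).trans_lt hy
    · change infDist y F + δ < 10 * t
      linarith
  · rw [ENNReal.coe_mul, ENNReal.coe_mul, ENNReal.coe_rpow_of_nonneg _ (by linarith)]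
    have htwo : (2 : ℝ≥0∞) ^ (p + τ + 1) ≤ 2 ^ (p + 2) :=
      ENNReal.rpow_le_rpow_of_exponent_le one_le_two (by linarith)
    have hten : ENNReal.ofReal 10 ^ τ ≤ 10 := by
      rw [ENNReal.ofReal_ofNat]
      exact (ENNReal.rpow_le_rpow_of_exponent_le (by norm_num) hτ1).trans_eq (ENNReal.rpow_one _)
    exact mul_le_mul_left (mul_le_mul' (mul_le_mul_left htwo _) hten) _

lemma lintegral_enorm_rpow_mul_regDist_rpow_ne_top {F : Set (En n)} {δ N a : ℝ} (hδ : 0 < δ)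
    (ha : a ≤ 0) (hp : 0 < p) {V : En n → ℝ} (hV1 : ∀ x, ‖V x‖ₑ ≤ 1)
    (hVN : ∀ x, N < ‖x‖ → V x = 0) :
    ∫⁻ x, ‖V x‖ₑ ^ p * ENNReal.ofReal (regDist F δ x) ^ a ≠ ∞ := by
  have hle : ∀ x, ‖V x‖ₑ ^ p * ENNReal.ofReal (regDist F δ x) ^ a ≤
      (closedBall (0 : En n) N).indicator (fun _ => ENNReal.ofReal δ ^ a) x := fun x => by
    by_cases hx : x ∈ closedBall (0 : En n) N
    · rw [indicator_of_mem hx, ENNReal.ofReal_rpow_of_pos (regDist_pos F hδ x),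
        ENNReal.ofReal_rpow_of_pos hδ]
      exact mul_le_of_le_one_of_le (ENNReal.rpow_le_one (hV1 x) hp.le) <|
        ENNReal.ofReal_le_ofReal <| Real.rpow_le_rpow_of_nonpos hδ (le_regDist F δ x) ha
    · rw [mem_closedBall_zero_iff, not_le] at hx
      rw [hVN x hx, enorm_zero, ENNReal.zero_rpow_of_pos hp, zero_mul]
      exact zero_le
  refine ne_top_of_le_ne_top ?_ (lintegral_mono hle)
  rw [lintegral_indicator_const measurableSet_closedBall]
  exact ENNReal.mul_ne_top
    (ENNReal.rpow_ne_top_of_ne_zero (ENNReal.ofReal_pos.2 hδ).ne' ENNReal.ofReal_ne_top)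
    measure_closedBall_lt_top.ne

lemma setLIntegral_enorm_fderiv_mul_regDist_rpow_le {F : Set (En n)} {δ a : ℝ} (hδ : 0 < δ)
    (ha : 0 ≤ a) (hp : 1 ≤ p) {V : En n → ℝ} (hV : LocallyLipschitz V) (b : ℝ) (s : Set (En n)) :
    ∫⁻ x in s, ‖fderiv ℝ (fun y => V y * regDist F δ y ^ a) x‖ₑ ^ p *
        ENNReal.ofReal (regDist F δ x) ^ b ≤
      2 ^ (p - 1) *
        ((∫⁻ x in s, ‖fderiv ℝ V x‖ₑ ^ p * ENNReal.ofReal (regDist F δ x) ^ (a * p + b)) +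
          ENNReal.ofReal a ^ p *
            ∫⁻ x in s, ‖V x‖ₑ ^ p * ENNReal.ofReal (regDist F δ x) ^ (a * p - p + b)) := by
  have hp0 : 0 ≤ p := by linarith
  have hDl := (lipschitzWith_regDist F δ).locallyLipschitz
  have := hV.continuous.measurable
  have hDm := hDl.continuous.measurable
  have hpt : ∀ᵐ x : En n, ‖fderiv ℝ (fun y => V y * regDist F δ y ^ a) x‖ₑ ^ p *
      ENNReal.ofReal (regDist F δ x) ^ b ≤
      2 ^ (p - 1) * (‖fderiv ℝ V x‖ₑ ^ p * ENNReal.ofReal (regDist F δ x) ^ (a * p + b) +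
        ENNReal.ofReal a ^ p *
          (‖V x‖ₑ ^ p * ENNReal.ofReal (regDist F δ x) ^ (a * p - p + b))) := by
    filter_upwards [ae_differentiableAt_of_locallyLipschitz hV,
      ae_differentiableAt_of_locallyLipschitz hDl] with x hVx hDx
    have hpos := regDist_pos F hδ x
    have hne := (ENNReal.ofReal_pos.2 hpos).ne'
    refine (mul_le_mul_left (enorm_fderiv_mul_rpow_rpow_le hVx hDx hpos
      (enorm_fderiv_regDist_le F δ x) ha hp) _).trans_eq ?_
    rw [ENNReal.rpow_add _ b hne ENNReal.ofReal_ne_top,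
      ENNReal.rpow_add _ b hne ENNReal.ofReal_ne_top]
    ring
  refine (lintegral_mono_ae (ae_restrict_of_ae hpt)).trans_eq ?_
  rw [lintegral_const_mul' _ _ (by finiteness), lintegral_add_left (by fun_prop),
    lintegral_const_mul' _ _ (by finiteness)]

lemma enorm_mul_regDist_rpow_rpow_mul (F : Set (En n)) {δ : ℝ} (hδ : 0 < δ) (hp : 0 ≤ p)
    (V : En n → ℝ) (a b : ℝ) (x : En n) :
    ‖V x * regDist F δ x ^ a‖ₑ ^ p * ENNReal.ofReal (regDist F δ x) ^ b =
      ‖V x‖ₑ ^ p * ENNReal.ofReal (regDist F δ x) ^ (a * p + b) := by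
  have hpos := regDist_pos F hδ x
  rw [enorm_mul, Real.enorm_of_nonneg (Real.rpow_nonneg hpos.le a),
    ← ENNReal.ofReal_rpow_of_pos hpos, ENNReal.mul_rpow_of_nonneg _ _ hp, ← ENNReal.rpow_mul,
    mul_assoc, ← ENNReal.rpow_add _ _ (ENNReal.ofReal_pos.2 hpos).ne' ENNReal.ofReal_ne_top]

lemma ofReal_rpow_sub_one_mul_self {b : ℝ} (hb : 0 < b) (p : ℝ) :
    ENNReal.ofReal b ^ (p - 1) * ENNReal.ofReal b = ENNReal.ofReal b ^ p := by
  rw [ENNReal.ofReal_rpow_of_pos hb, ENNReal.ofReal_rpow_of_pos hb,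
    ← ENNReal.ofReal_mul (by positivity), Real.rpow_sub_one hb.ne', div_mul_cancel₀ _ hb.ne']

/- Hardy's inequality for `V * regDist F δ ^ (2 * β)`, whose gradient produces the left-hand side
again, with a factor small enough to be absorbed. -/
lemma exists_weighted_poincare (n : ℕ) (hp : 1 < p) (hc : 0 < c) :
    ∃ C : ℝ≥0, ∀ (F : Set (En n)) (δ N T β : ℝ), 0 < δ → 0 < β → β * p ≤ 1 →
      C * ENNReal.ofReal β ^ (p - 1) ≤ 1 → F.Nonempty →
      LocUnifPFatAt p F (F ∩ closedBall 0 (N + T)) c (3 * T) →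
      ∀ V, IsHardyTest F δ N T V → (∀ x, ‖V x‖ₑ ≤ 1) →
      ENNReal.ofReal β * ∫⁻ x, ‖V x‖ₑ ^ p * ENNReal.ofReal (regDist F δ x) ^ (β * p - p) ≤
        C * ∫⁻ x, ‖fderiv ℝ V x‖ₑ ^ p * ENNReal.ofReal (regDist F δ x) ^ (β * p) := by
  obtain ⟨C, hhardy⟩ := exists_weighted_hardy n hp hc
  have hp0 : 0 < p := by linarith
  refine ⟨2 * C * 2 ^ (p - 1) * 2 ^ p, fun F δ N T β hδ hβ hβp hβC hF hfat V hV hV1 => ?_⟩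
  set b := ENNReal.ofReal β
  set H := ∫⁻ x, ‖V x‖ₑ ^ p * ENNReal.ofReal (regDist F δ x) ^ (β * p - p) with hH
  set G := ∫⁻ x, ‖fderiv ℝ V x‖ₑ ^ p * ENNReal.ofReal (regDist F δ x) ^ (β * p) with hG
  have hHfin : H ≠ ∞ :=
    lintegral_enorm_rpow_mul_regDist_rpow_ne_top hδ (by linarith) hp0 hV1 hV.eq_zero_of_lt_norm
  have hHardy := hhardy F δ N T (β * p) hδ (by positivity) hβp hF hfat _
    (hV.mul_regDist_rpow hδ (2 * β))
  have henergy := setLIntegral_enorm_fderiv_mul_regDist_rpow_le (F := F) (a := 2 * β) hδ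
    (by positivity) hp.le hV.locallyLipschitz (-(β * p)) univ
  simp_rw [enorm_mul_regDist_rpow_rpow_mul F hδ hp0.le,
    show 2 * β * p + -(p + β * p) = β * p - p by ring, ← hH] at hHardy
  rw [Measure.restrict_univ, show 2 * β * p + -(β * p) = β * p by ring,
    show 2 * β * p - p + -(β * p) = β * p - p by ring, ← hG, ← hH] at henergy
  have hbp : ENNReal.ofReal (2 * β) ^ p = 2 ^ p * (b ^ (p - 1) * b) := by
    rw [ENNReal.ofReal_mul zero_le_two, ENNReal.mul_rpow_of_nonneg _ _ hp0.le,
      ENNReal.ofReal_ofNat, ofReal_rpow_sub_one_mul_self hβ]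
  have hbH : b * H ≤ C * (2 ^ (p - 1) * (G + 2 ^ p * (b ^ (p - 1) * b) * H)) := by
    rw [← hbp]
    exact (mul_le_mul_left (ENNReal.ofReal_le_ofReal (le_mul_of_one_le_right hβ.le hp.le)) _).trans
      (hHardy.trans (mul_le_mul_right henergy _))
  push_cast [ENNReal.coe_rpow_of_nonneg _ hp0.le, ENNReal.coe_rpow_of_nonneg _ (sub_pos.2 hp).le]
    at hβC ⊢
  have habsorb : b * H + b * H ≤ 2 * C * 2 ^ (p - 1) * 2 ^ p * G + b * H := by
    calc b * H + b * H
        ≤ 2 * (C * (2 ^ (p - 1) * (G + 2 ^ p * (b ^ (p - 1) * b) * H))) := by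
          rw [← two_mul]
          exact mul_le_mul_right hbH 2
      _ = 2 * C * 2 ^ (p - 1) * 1 * G +
            2 * C * 2 ^ (p - 1) * 2 ^ p * b ^ (p - 1) * (b * H) := by ring
      _ ≤ 2 * C * 2 ^ (p - 1) * 2 ^ p * G + 1 * (b * H) := by
          gcongr
          exact ENNReal.one_le_rpow one_le_two hp0
      _ = _ := by rw [one_mul]
  exact (ENNReal.add_le_add_iff_right (ENNReal.mul_ne_top ENNReal.ofReal_ne_top hHfin)).1 habsorb

lemma exists_local_weighted_poincare (n : ℕ) (hp : 1 < p) (hc : 0 < c) :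
    ∃ C : ℝ≥0, ∀ (F : Set (En n)) (δ N T β : ℝ), 0 < δ → 0 < β → β * p ≤ 1 →
      C * ENNReal.ofReal β ^ (p - 1) ≤ 1 → F.Nonempty →
      LocUnifPFatAt p F (F ∩ closedBall 0 (N + T)) c (3 * T) →
      ∀ V, IsHardyTest F δ N T V → (∀ x, ‖V x‖ₑ ≤ 1) →
      ∀ z ∈ F ∩ closedBall 0 (N + T), ∀ r : ℝ, 0 < r → r < 3 * T →
      ∫⁻ x in ball z r, ‖V x‖ₑ ^ p * ENNReal.ofReal (regDist F δ x) ^ (β * p) ≤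
        C * ENNReal.ofReal r ^ p *
          ((∫⁻ x in ball z (3 * r),
              ‖fderiv ℝ V x‖ₑ ^ p * ENNReal.ofReal (regDist F δ x) ^ (β * p)) +
            ENNReal.ofReal β ^ (p - 1) *
              ∫⁻ x, ‖fderiv ℝ V x‖ₑ ^ p * ENNReal.ofReal (regDist F δ x) ^ (β * p)) := by
  obtain ⟨C₁, hmazya⟩ := exists_mazya_ball n hp hc
  obtain ⟨C₂, hpoincare⟩ := exists_weighted_poincare n hp hc
  have hp0 : 0 < p := by linarith
  refine ⟨C₁ * 2 ^ (p - 1) * (1 + C₂) + C₂,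
    fun F δ N T β hδ hβ hβp hβC hF hfat V hV hV1 z hz r hr hrT => ?_⟩
  have hβC₂ : C₂ * ENNReal.ofReal β ^ (p - 1) ≤ 1 :=
    (mul_le_mul_left (ENNReal.coe_le_coe.2 le_add_self) _).trans hβC
  have hVβ := hV.mul_regDist_rpow hδ β
  have hM := hmazya F z r hr (hfat z hz r hr hrT) _ hVβ.locallyLipschitz hVβ.eq_zero_of_mem
  have hE := setLIntegral_enorm_fderiv_mul_regDist_rpow_le (F := F) hδ hβ.le hp.le
    hV.locallyLipschitz 0 (ball z (3 * r))
  have hP := hpoincare F δ N T β hδ hβ hβp hβC₂ hF hfat V hV hV1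
  have hpow := fun (V : En n → ℝ) a x => enorm_mul_regDist_rpow_rpow_mul F hδ hp0.le V a 0 x
  simp only [ENNReal.rpow_zero, mul_one, add_zero] at hpow hE
  simp_rw [hpow] at hM
  set b := ENNReal.ofReal β
  set G := ∫⁻ x, ‖fderiv ℝ V x‖ₑ ^ p * ENNReal.ofReal (regDist F δ x) ^ (β * p)
  set G' := ∫⁻ x in ball z (3 * r),
    ‖fderiv ℝ V x‖ₑ ^ p * ENNReal.ofReal (regDist F δ x) ^ (β * p)
  set H := ∫⁻ x, ‖V x‖ₑ ^ p * ENNReal.ofReal (regDist F δ x) ^ (β * p - p)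
  have hbH : b ^ p * ∫⁻ x in ball z (3 * r),
      ‖V x‖ₑ ^ p * ENNReal.ofReal (regDist F δ x) ^ (β * p - p) ≤ C₂ * (b ^ (p - 1) * G) := by
    refine (mul_le_mul_right (setLIntegral_le_lintegral _ _) _).trans ?_
    rw [← ofReal_rpow_sub_one_mul_self hβ, mul_assoc]
    exact (mul_le_mul_right hP _).trans_eq (mul_left_comm _ _ _)
  push_cast [ENNReal.coe_rpow_of_nonneg _ (sub_pos.2 hp).le]
  calc ∫⁻ x in ball z r, ‖V x‖ₑ ^ p * ENNReal.ofReal (regDist F δ x) ^ (β * p)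
      ≤ C₁ * ENNReal.ofReal r ^ p * (2 ^ (p - 1) * (G' + C₂ * (b ^ (p - 1) * G))) :=
        hM.trans (mul_le_mul_right (hE.trans (mul_le_mul_right (add_le_add_right hbH _) _)) _)
    _ ≤ C₁ * ENNReal.ofReal r ^ p *
          (2 ^ (p - 1) * ((1 + C₂) * G' + (1 + C₂) * (b ^ (p - 1) * G))) := by
        gcongr
        · exact le_mul_of_one_le_left' le_self_add
        · exact le_add_self
    _ = C₁ * 2 ^ (p - 1) * (1 + C₂) * ENNReal.ofReal r ^ p * (G' + b ^ (p - 1) * G) := by ring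
    _ ≤ _ := by
        gcongr
        exact le_self_add

end WeightedHardy

section CoverCutoff

variable {X E ι : Type*}

/-- The minimum of the cutoffs `annularCutoff (a i) (ρ i)`, `i ∈ T`: it vanishes on the union of
the balls `closedBall (a i) (ρ i)` and equals `1` outside the union of their doubles. -/
def coverCutoff [PseudoMetricSpace X] (T : Finset ι) (a : ι → X) (ρ : ι → ℝ) (x : X) : ℝ :=
  T.fold min 1 fun i => annularCutoff (a i) (ρ i) x

section Metric

variable [PseudoMetricSpace X] {T : Finset ι} {a : ι → X} {ρ : ι → ℝ} {x : X}

lemma coverCutoff_nonneg : 0 ≤ coverCutoff T a ρ x :=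
  Finset.le_fold_min _ |>.2 ⟨zero_le_one, fun _ _ => annularCutoff_nonneg⟩

lemma coverCutoff_le_one : coverCutoff T a ρ x ≤ 1 :=
  Finset.fold_min_le _ |>.2 (Or.inl le_rfl)

lemma coverCutoff_le {i : ι} (hi : i ∈ T) : coverCutoff T a ρ x ≤ annularCutoff (a i) (ρ i) x :=
  Finset.fold_min_le _ |>.2 (Or.inr ⟨i, hi, le_rfl⟩)

lemma coverCutoff_eq_one_or_exists :
    coverCutoff T a ρ x = 1 ∨ ∃ i ∈ T, coverCutoff T a ρ x = annularCutoff (a i) (ρ i) x := by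
  rcases (Finset.fold_min_le _).1 (le_refl (coverCutoff T a ρ x)) with h | ⟨i, hi, h⟩
  · exact Or.inl (coverCutoff_le_one.antisymm h)
  · exact Or.inr ⟨i, hi, (coverCutoff_le hi).antisymm h⟩

lemma coverCutoff_eq_zero {i : ι} (hi : i ∈ T) (hρ : 0 < ρ i) (h : dist x (a i) ≤ ρ i) :
    coverCutoff T a ρ x = 0 :=
  ((coverCutoff_le hi).trans_eq (annularCutoff_eq_zero hρ h)).antisymm coverCutoff_nonneg

lemma coverCutoff_eq_one (hρ : ∀ i ∈ T, 0 < ρ i) (h : ∀ i ∈ T, 2 * ρ i ≤ dist x (a i)) :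
    coverCutoff T a ρ x = 1 :=
  coverCutoff_le_one.antisymm <| Finset.le_fold_min _ |>.2
    ⟨le_rfl, fun i hi => (annularCutoff_eq_one (hρ i hi) (h i hi)).ge⟩

lemma locallyLipschitz_coverCutoff (hρ : ∀ i ∈ T, 0 < ρ i) :
    LocallyLipschitz (coverCutoff T a ρ) := by
  classical
  induction T using Finset.induction_on with
  | empty => exact LocallyLipschitz.const 1
  | insert j T hj ih =>
    have hmin : coverCutoff (insert j T) a ρ =
        fun x => min (annularCutoff (a j) (ρ j) x) (coverCutoff T a ρ x) :=
      funext fun x => Finset.fold_insert hj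
    rw [hmin]
    have hρj : 0 < ρ j := hρ j (Finset.mem_insert_self j T)
    exact (lipschitzWith_annularCutoff (a j) hρj).locallyLipschitz.min
      (ih fun i hi => hρ i (Finset.mem_insert_of_mem hi))

end Metric

variable [NormedAddCommGroup E] [NormedSpace ℝ E]

lemma fderiv_eq_of_le_of_eq {u v : E → ℝ} {x : E} (hu : DifferentiableAt ℝ u x)
    (hv : DifferentiableAt ℝ v x) (hle : ∀ y, u y ≤ v y) (heq : u x = v x) :
    fderiv ℝ u x = fderiv ℝ v x := by
  have hmin : IsLocalMin (fun y => v y - u y) x := Filter.Eventually.of_forall fun y => by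
    simpa only [heq, sub_self, sub_nonneg] using hle y
  have h := hmin.fderiv_eq_zero
  rw [fderiv_fun_sub hv hu, sub_eq_zero] at h
  exact h.symm

lemma enorm_fderiv_coverCutoff_le {T : Finset ι} {a : ι → E} {ρ : ι → ℝ} {x : E}
    (hρ : ∀ i ∈ T, 0 < ρ i) (hx : DifferentiableAt ℝ (coverCutoff T a ρ) x)
    (hxi : ∀ i ∈ T, DifferentiableAt ℝ (annularCutoff (a i) (ρ i)) x) {p : ℝ} (hp : 0 < p) :
    ‖fderiv ℝ (coverCutoff T a ρ) x‖ₑ ^ p ≤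
      ∑ i ∈ T, (closedBall (a i) (2 * ρ i)).indicator (fun _ => ENNReal.ofReal (ρ i)⁻¹ ^ p) x := by
  rcases coverCutoff_eq_one_or_exists (T := T) (a := a) (ρ := ρ) (x := x) with h | ⟨i, hi, h⟩
  · have hmax : IsLocalMax (coverCutoff T a ρ) x := Filter.Eventually.of_forall fun y =>
      coverCutoff_le_one.trans_eq h.symm
    rw [← ofReal_norm, hmax.fderiv_eq_zero, norm_zero, ENNReal.ofReal_zero,
      ENNReal.zero_rpow_of_pos hp]
    exact zero_le
  · rw [fderiv_eq_of_le_of_eq hx (hxi i hi) (fun y => coverCutoff_le hi) h]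
    refine le_trans ?_ (Finset.single_le_sum (fun _ _ => zero_le) hi)
    have hle := ENNReal.rpow_le_rpow (enorm_fderiv_annularCutoff_le (a i) x (hρ i hi)) hp.le
    exact hle.trans_eq <| Eq.symm <| congrFun
      (indicator_comp_of_zero (g := fun t : ℝ≥0∞ => t ^ p) (ENNReal.zero_rpow_of_pos hp)) x

lemma ofReal_rpow_le_ofReal_mul_of_le_mul {d K r τ : ℝ} (hd : 0 < d) (hr : 0 ≤ r) (hK : 1 ≤ K)
    (hdr : d ≤ K * r) (hτ : 0 ≤ τ) (hτ1 : τ ≤ 1) :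
    ENNReal.ofReal d ^ τ ≤ ENNReal.ofReal (K * r ^ τ) := by
  rw [ENNReal.ofReal_rpow_of_pos hd]
  refine ENNReal.ofReal_le_ofReal ((Real.rpow_le_rpow hd.le hdr hτ).trans ?_)
  rw [Real.mul_rpow (by linarith) hr]
  exact mul_le_mul_of_nonneg_right (Real.rpow_le_self_of_one_le hK hτ1) (Real.rpow_nonneg hr τ)

variable [MeasurableSpace E] [BorelSpace E] [FiniteDimensional ℝ E]

lemma lintegral_enorm_fderiv_coverCutoff_rpow_mul_le (μ : Measure E) [μ.IsAddHaarMeasure]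
    {p τ : ℝ} (hp : 0 < p) (hτ : 0 ≤ τ) (hτ1 : τ ≤ 1) {F : Set E} {T : Finset ι} {a : ι → E}
    {ρ : ι → ℝ} (haF : ∀ i ∈ T, a i ∈ F) (hρ : ∀ i ∈ T, 0 < ρ i) {δ : ℝ} (hδ : 0 < δ)
    (hδρ : ∀ i ∈ T, δ ≤ ρ i) :
    ∫⁻ x, ‖fderiv ℝ (coverCutoff T a ρ) x‖ₑ ^ p * ENNReal.ofReal (regDist F δ x) ^ τ ∂μ ≤
      3 * 2 ^ Module.finrank ℝ E * μ (ball 0 1) *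
        ∑ i ∈ T, ENNReal.ofReal (ρ i ^ (Module.finrank ℝ E - p + τ)) := by
  have hDτ : ∀ i ∈ T, ∀ x ∈ closedBall (a i) (2 * ρ i),
      ENNReal.ofReal (regDist F δ x) ^ τ ≤ ENNReal.ofReal (3 * ρ i ^ τ) := fun i hi x hx => by
    refine ofReal_rpow_le_ofReal_mul_of_le_mul (regDist_pos F hδ x) (hρ i hi).le (by norm_num) ?_
      hτ hτ1
    have h := (infDist_le_dist_of_mem (haF i hi)).trans (mem_closedBall.1 hx)
    rw [regDist]
    linarith [hδρ i hi]
  have hpt : ∀ᵐ x ∂μ, ‖fderiv ℝ (coverCutoff T a ρ) x‖ₑ ^ p * ENNReal.ofReal (regDist F δ x) ^ τ ≤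
      ∑ i ∈ T, (closedBall (a i) (2 * ρ i)).indicator
        (fun _ => ENNReal.ofReal (3 * ρ i ^ (τ - p))) x := by
    filter_upwards [ae_differentiableAt_of_locallyLipschitz (locallyLipschitz_coverCutoff hρ),
      (Finset.eventually_all T).2 fun i hi => ae_differentiableAt_of_locallyLipschitz
        (lipschitzWith_annularCutoff (a i) (hρ i hi)).locallyLipschitz] with x hx hxi
    refine (mul_le_mul_left (enorm_fderiv_coverCutoff_le hρ hx hxi hp) _).trans ?_
    rw [Finset.sum_mul]
    refine Finset.sum_le_sum fun i hi => ?_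
    by_cases hxa : x ∈ closedBall (a i) (2 * ρ i)
    · simp only [indicator_of_mem hxa]
      refine (mul_le_mul_right (hDτ i hi x hxa) _).trans_eq ?_
      rw [ENNReal.ofReal_rpow_of_pos (inv_pos.2 (hρ i hi)),
        ← ENNReal.ofReal_mul (by have := hρ i hi; positivity), Real.inv_rpow (hρ i hi).le,
        mul_left_comm, Real.rpow_sub (hρ i hi), inv_mul_eq_div]
    · simp only [indicator_of_notMem hxa, zero_mul, le_refl]
  refine (lintegral_mono_ae hpt).trans_eq ?_
  rw [lintegral_finsetSum _ fun i _ => measurable_const.indicator measurableSet_closedBall,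
    Finset.mul_sum]
  refine Finset.sum_congr rfl fun i hi => ?_
  rw [lintegral_indicator_const measurableSet_closedBall,
    Measure.addHaar_closedBall μ _ (by linarith [hρ i hi]), mul_pow,
    ENNReal.ofReal_mul zero_le_three, ENNReal.ofReal_mul (pow_nonneg zero_le_two _),
    ENNReal.ofReal_pow zero_le_two, ENNReal.ofReal_ofNat, ENNReal.ofReal_ofNat,
    show Module.finrank ℝ E - p + τ = Module.finrank ℝ E + (τ - p) by ring,
    Real.rpow_add (hρ i hi), Real.rpow_natCast, ENNReal.ofReal_mul (pow_nonneg (hρ i hi).le _)]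
  ring

end CoverCutoff

section Content

variable {n : ℕ} {p : ℝ} {ι : Type*} {T : Finset ι} {a : ι → En n} {ρ : ι → ℝ} {F : Set (En n)}

/-- The test function that compares a cover of `F` with its content: the cutoff of the cover,
truncated outside `ball 0 8`. -/
def coverTest (T : Finset ι) (a : ι → En n) (ρ : ι → ℝ) (x : En n) : ℝ :=
  coverCutoff T a ρ x * ballCutoff 0 8 x

lemma enorm_coverTest_le_one (x : En n) : ‖coverTest T a ρ x‖ₑ ≤ 1 := by
  rw [coverTest, enorm_mul, Real.enorm_of_nonneg coverCutoff_nonneg]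
  exact mul_le_one' (ENNReal.ofReal_le_one.2 coverCutoff_le_one) enorm_ballCutoff_le_one

lemma coverTest_eq_zero (hρ : ∀ i ∈ T, 0 < ρ i)
    (hcov : F ∩ closedBall 0 16 ⊆ ⋃ i ∈ T, closedBall (a i) (ρ i)) {x : En n} (hx : x ∈ F) :
    coverTest T a ρ x = 0 := by
  rcases le_total ‖x‖ 16 with h | h
  · obtain ⟨i, hi, hxi⟩ := mem_iUnion₂.1 (hcov ⟨hx, mem_closedBall_zero_iff.2 h⟩)
    rw [coverTest, coverCutoff_eq_zero hi (hρ i hi) (mem_closedBall.1 hxi), zero_mul]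
  · rw [coverTest, ballCutoff_eq_zero (by norm_num) (by rw [dist_zero_right]; linarith), mul_zero]

lemma norm_le_of_coverTest_ne_zero {x : En n} (hx : coverTest T a ρ x ≠ 0) : ‖x‖ ≤ 16 := by
  contrapose! hx
  rw [coverTest, ballCutoff_eq_zero (by norm_num) (by rw [dist_zero_right]; linarith), mul_zero]

lemma coverTest_eq_one (hF : infDist 0 F = 1) (haF : ∀ i ∈ T, a i ∈ F) (hρ : ∀ i ∈ T, 0 < ρ i)
    (hsmall : ∀ i ∈ T, 4 * ρ i ≤ ‖a i‖) {x : En n} (hx : x ∈ ball 0 (1 / 2)) :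
    coverTest T a ρ x = 1 := by
  rw [mem_ball_zero_iff] at hx
  have hcover : coverCutoff T a ρ x = 1 := coverCutoff_eq_one hρ fun i hi => by
    have h1 : 1 ≤ ‖a i‖ := by
      rw [← hF, ← dist_zero_left]
      exact infDist_le_dist_of_mem (haF i hi)
    have h2 := norm_sub_norm_le (a i) x
    rw [dist_eq_norm, norm_sub_rev]
    linarith [hsmall i hi]
  rw [coverTest, hcover, ballCutoff_eq_one (by norm_num) (by rw [dist_zero_right]; linarith),
    one_mul]

lemma locallyLipschitz_coverTest (hρ : ∀ i ∈ T, 0 < ρ i) : LocallyLipschitz (coverTest T a ρ) :=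
  locallyLipschitz_mul (locallyLipschitz_coverCutoff hρ)
    (locallyLipschitz_ballCutoff 0 (by norm_num))

lemma regDist_le_add_norm (hF : infDist 0 F = 1) {δ : ℝ} (hδ : δ ≤ 1) (x : En n) :
    regDist F δ x ≤ 2 + ‖x‖ := by
  have h := infDist_le_infDist_add_dist (s := F) (x := x) (y := 0)
  rw [hF, dist_zero_right] at h
  rw [regDist]
  linarith

lemma isHardyTest_coverTest (hF : infDist 0 F = 1) (hρ : ∀ i ∈ T, 0 < ρ i)
    (hcov : F ∩ closedBall 0 16 ⊆ ⋃ i ∈ T, closedBall (a i) (ρ i)) {δ : ℝ} (hδ : δ ≤ 1) :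
    IsHardyTest F δ 16 37 (coverTest T a ρ) where
  locallyLipschitz := locallyLipschitz_coverTest hρ
  eq_zero_of_mem _ hx := coverTest_eq_zero hρ hcov hx
  eq_zero_of_lt_norm _ hx := not_not.1 fun h => hx.not_ge (norm_le_of_coverTest_ne_zero h)
  two_mul_regDist_lt x hx := by
    linarith [regDist_le_add_norm hF hδ x, norm_le_of_coverTest_ne_zero hx]

lemma setLIntegral_enorm_fderiv_coverTest_le {τ : ℝ} (hp : 0 < p) (hτ : 0 ≤ τ) (hτ1 : τ ≤ 1)
    (haF : ∀ i ∈ T, a i ∈ F) (hρ : ∀ i ∈ T, 0 < ρ i) {δ : ℝ} (hδ : 0 < δ)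
    (hδρ : ∀ i ∈ T, δ ≤ ρ i) :
    ∫⁻ x in ball 0 8, ‖fderiv ℝ (coverTest T a ρ) x‖ₑ ^ p * ENNReal.ofReal (regDist F δ x) ^ τ ≤
      3 * 2 ^ n * volume (ball (0 : En n) 1) *
        ∑ i ∈ T, ENNReal.ofReal (ρ i ^ (n - p + τ)) := by
  have hcover := lintegral_enorm_fderiv_coverCutoff_rpow_mul_le volume hp hτ hτ1 haF hρ hδ hδρ
  rw [finrank_euclideanSpace_fin] at hcover
  refine le_trans ?_ ((setLIntegral_le_lintegral (ball 0 8) _).trans hcover)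
  refine (setLIntegral_congr_fun measurableSet_ball fun x hx => ?_).le
  have heq : coverTest T a ρ =ᶠ[𝓝 x] coverCutoff T a ρ := by
    filter_upwards [isOpen_ball.mem_nhds hx] with y hy
    rw [coverTest, ballCutoff_eq_one (by norm_num) (mem_ball.1 hy).le, mul_one]
  beta_reduce
  rw [heq.fderiv_eq]

lemma enorm_fderiv_coverTest_rpow_le (hp : 1 < p) {x : En n}
    (hx : DifferentiableAt ℝ (coverCutoff T a ρ) x)
    (hx8 : DifferentiableAt ℝ (ballCutoff (0 : En n) 8) x) :
    ‖fderiv ℝ (coverTest T a ρ) x‖ₑ ^ p ≤ 2 ^ (p - 1) *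
      (‖fderiv ℝ (coverCutoff T a ρ) x‖ₑ ^ p + (closedBall 0 16).indicator (fun _ => 1) x) := by
  have hψ : ‖fderiv ℝ (ballCutoff (0 : En n) 8) x‖ₑ ^ p ≤
      (closedBall 0 16).indicator (fun _ => 1) x := by
    have h := enorm_fderiv_ballCutoff_le (0 : En n) x (ρ := 8) (by norm_num)
    rw [show (2 : ℝ) * 8 = 16 by norm_num] at h
    by_cases hx16 : x ∈ closedBall (0 : En n) 16
    · rw [indicator_of_mem hx16] at h ⊢
      exact ENNReal.rpow_le_one (h.trans (ENNReal.ofReal_le_one.2 (by norm_num))) (by linarith)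
    · rw [indicator_of_notMem hx16] at h ⊢
      rw [le_zero_iff.1 h, ENNReal.zero_rpow_of_pos (by linarith)]
  have hle : ‖fderiv ℝ (coverTest T a ρ) x‖ₑ ≤
      ‖fderiv ℝ (coverCutoff T a ρ) x‖ₑ + ‖fderiv ℝ (ballCutoff (0 : En n) 8) x‖ₑ := by
    refine (enorm_fderiv_mul_le hx hx8).trans ?_
    rw [add_comm]
    have hv : ‖coverCutoff T a ρ x‖ₑ ≤ 1 := by
      rw [Real.enorm_of_nonneg coverCutoff_nonneg]
      exact ENNReal.ofReal_le_one.2 coverCutoff_le_one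
    exact add_le_add (mul_le_of_le_one_left' enorm_ballCutoff_le_one) (mul_le_of_le_one_left' hv)
  refine (ENNReal.rpow_le_rpow hle (by linarith)).trans ?_
  refine (ENNReal.rpow_add_le_mul_rpow_add_rpow _ _ hp.le).trans ?_
  gcongr

lemma lintegral_enorm_fderiv_coverTest_le {τ : ℝ} (hp : 1 < p) (hτ : 0 ≤ τ) (hτ1 : τ ≤ 1)
    (hF : infDist 0 F = 1) (haF : ∀ i ∈ T, a i ∈ F) (hρ : ∀ i ∈ T, 0 < ρ i) {δ : ℝ} (hδ : 0 < δ)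
    (hδ1 : δ ≤ 1) (hδρ : ∀ i ∈ T, δ ≤ ρ i) :
    ∫⁻ x, ‖fderiv ℝ (coverTest T a ρ) x‖ₑ ^ p * ENNReal.ofReal (regDist F δ x) ^ τ ≤
      2 ^ (p - 1) * (3 * 2 ^ n * volume (ball (0 : En n) 1) *
        ∑ i ∈ T, ENNReal.ofReal (ρ i ^ (n - p + τ)) + 18 * volume (closedBall (0 : En n) 16)) := by
  have hcover := lintegral_enorm_fderiv_coverCutoff_rpow_mul_le volume (by linarith : 0 < p)
    hτ hτ1 haF hρ hδ hδρ
  rw [finrank_euclideanSpace_fin] at hcover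
  have hD : ∀ x ∈ closedBall (0 : En n) 16, ENNReal.ofReal (regDist F δ x) ^ τ ≤ 18 := by
    intro x hx
    rw [← ENNReal.ofReal_ofNat (n := 18)]
    have h := ofReal_rpow_le_ofReal_mul_of_le_mul (K := 18) (regDist_pos F hδ x) zero_le_one
      (by norm_num) (by linarith [regDist_le_add_norm hF hδ1 x, mem_closedBall_zero_iff.1 hx])
      hτ hτ1
    simpa only [Real.one_rpow, mul_one] using h
  calc ∫⁻ x, ‖fderiv ℝ (coverTest T a ρ) x‖ₑ ^ p * ENNReal.ofReal (regDist F δ x) ^ τ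
      ≤ ∫⁻ x, 2 ^ (p - 1) * (‖fderiv ℝ (coverCutoff T a ρ) x‖ₑ ^ p *
          ENNReal.ofReal (regDist F δ x) ^ τ + (closedBall 0 16).indicator (fun _ => 18) x) := by
        refine lintegral_mono_ae ?_
        filter_upwards [ae_differentiableAt_of_locallyLipschitz (locallyLipschitz_coverCutoff hρ),
          ae_differentiableAt_of_locallyLipschitz
            (locallyLipschitz_ballCutoff (0 : En n) (ρ := 8) (by norm_num))] with x hx hx8
        refine (mul_le_mul_left (enorm_fderiv_coverTest_rpow_le hp hx hx8) _).trans ?_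
        rw [mul_assoc, add_mul]
        gcongr
        by_cases hx16 : x ∈ closedBall (0 : En n) 16
        · simpa only [indicator_of_mem hx16, one_mul] using hD x hx16
        · simp only [indicator_of_notMem hx16, zero_mul, le_refl]
    _ = 2 ^ (p - 1) * ((∫⁻ x, ‖fderiv ℝ (coverCutoff T a ρ) x‖ₑ ^ p *
          ENNReal.ofReal (regDist F δ x) ^ τ) + 18 * volume (closedBall (0 : En n) 16)) := by
        rw [lintegral_const_mul' _ _ (by finiteness),
          lintegral_add_right _ (measurable_const.indicator measurableSet_closedBall),
          lintegral_indicator_const measurableSet_closedBall]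
    _ ≤ _ := by gcongr

lemma exists_energy_coverTest_le (n : ℕ) (hp : 1 < p) :
    ∃ K : ℝ≥0, ∀ (τ : ℝ) (F : Set (En n)) (T : Finset ι) (a : ι → En n) (ρ : ι → ℝ) (δ : ℝ),
      0 ≤ τ → τ ≤ 1 → infDist 0 F = 1 → (∀ i ∈ T, a i ∈ F) → (∀ i ∈ T, 0 < ρ i) →
      0 < δ → δ ≤ 1 → (∀ i ∈ T, δ ≤ ρ i) →
      ∫⁻ x in ball 0 8, ‖fderiv ℝ (coverTest T a ρ) x‖ₑ ^ p *
          ENNReal.ofReal (regDist F δ x) ^ τ ≤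
        K * ∑ i ∈ T, ENNReal.ofReal (ρ i ^ (n - p + τ)) ∧
      ∫⁻ x, ‖fderiv ℝ (coverTest T a ρ) x‖ₑ ^ p * ENNReal.ofReal (regDist F δ x) ^ τ ≤
        K * (∑ i ∈ T, ENNReal.ofReal (ρ i ^ (n - p + τ)) + 1) := by
  set K₁ : ℝ≥0∞ := 3 * 2 ^ n * volume (ball (0 : En n) 1)
  set K₂ : ℝ≥0∞ := 18 * volume (closedBall (0 : En n) 16)
  have hK : 2 ^ (p - 1) * (K₁ + K₂) ≠ ∞ := by
    have := measure_ball_lt_top (μ := volume) (x := (0 : En n)) (r := 1)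
    have := measure_closedBall_lt_top (μ := volume) (x := (0 : En n)) (r := 16)
    finiteness
  lift 2 ^ (p - 1) * (K₁ + K₂) to ℝ≥0 using hK with K hKeq
  have h2 : (1 : ℝ≥0∞) ≤ 2 ^ (p - 1) := ENNReal.one_le_rpow one_le_two (by linarith)
  refine ⟨K, fun τ F T a ρ δ hτ hτ1 hF haF hρ hδ hδ1 hδρ => ⟨?_, ?_⟩⟩
  · refine (setLIntegral_enorm_fderiv_coverTest_le (by linarith) hτ hτ1 haF hρ hδ hδρ).trans ?_
    rw [hKeq]
    exact mul_le_mul' (le_self_add.trans (le_mul_of_one_le_left' h2)) le_rfl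
  · refine (lintegral_enorm_fderiv_coverTest_le hp hτ hτ1 hF haF hρ hδ hδ1 hδρ).trans ?_
    rw [hKeq, mul_assoc (2 ^ (p - 1)), mul_add_one (K₁ + K₂)]
    exact mul_le_mul' le_rfl (add_le_add (mul_le_mul' le_self_add le_rfl) le_add_self)

end Content

section ContentLowerBound

variable {n : ℕ} {p : ℝ} {ι : Type*} {T : Finset ι} {a : ι → En n} {ρ : ι → ℝ} {F : Set (En n)}

lemma tendsto_coe_mul_ofReal_rpow_zero {b : ℝ} (hb : 0 < b) (M : ℝ≥0) :
    Filter.Tendsto (fun β : ℝ => M * ENNReal.ofReal β ^ b) (𝓝[>] 0) (𝓝 0) :=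
  (ENNReal.tendsto_const_mul_rpow_nhds_zero_of_pos ENNReal.coe_ne_top hb).comp <| by
    simpa only [ENNReal.ofReal_zero] using
      (ENNReal.continuous_ofReal.tendsto 0).mono_left nhdsWithin_le_nhds

lemma exists_small_exponent (hp : 1 < p) (A B : ℝ≥0) {ε : ℝ≥0∞} (hε : ε ≠ 0) :
    ∃ β : ℝ, 0 < β ∧ β * p ≤ 1 ∧ β * p ≤ p - 1 ∧ ENNReal.ofReal β ^ (p - 1) ≤ 1 ∧
      A * ENNReal.ofReal β ^ (p - 1) ≤ 1 ∧ B * ENNReal.ofReal β ^ (p - 1) ≤ ε := by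
  have hsmall : ∀ e : ℝ, 0 < e → ∀ᶠ β : ℝ in 𝓝[>] 0, β * p ≤ e := fun e he =>
    ((continuous_mul_const p).tendsto' 0 0 (zero_mul p)).mono_left nhdsWithin_le_nhds
      |>.eventually_le_const he
  have hp1 : 0 < p - 1 := by linarith
  have hzero (M : ℝ≥0) := tendsto_coe_mul_ofReal_rpow_zero hp1 M
  obtain ⟨β, hβ, hβ1, hβp, hone, hA, hB⟩ := (eventually_mem_nhdsWithin.and <|
    (hsmall 1 one_pos).and <| (hsmall (p - 1) hp1).and <|
    ((hzero 1).eventually_le_const one_pos).and <| ((hzero A).eventually_le_const one_pos).and <|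
    (hzero B).eventually_le_const (pos_iff_ne_zero.2 hε)).exists
  exact ⟨β, hβ, hβ1, hβp, by simpa only [ENNReal.coe_one, one_mul] using hone, hA, hB⟩

lemma exists_pos_le_one_forall_le (hρ : ∀ i ∈ T, 0 < ρ i) :
    ∃ δ : ℝ, 0 < δ ∧ δ ≤ 1 ∧ ∀ i ∈ T, δ ≤ ρ i := by
  have h : ∀ᶠ δ : ℝ in 𝓝[>] 0, δ ≤ 1 ∧ ∀ i ∈ T, δ ≤ ρ i :=
    ((eventually_le_nhds one_pos).and ((Filter.eventually_all_finset T).2 fun i hi =>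
      eventually_le_nhds (hρ i hi))).filter_mono nhdsWithin_le_nhds
  obtain ⟨δ, hδ1, hδ⟩ := (h.and self_mem_nhdsWithin).exists
  exact ⟨δ, hδ, hδ1⟩

lemma half_mul_volume_le_setLIntegral_coverTest (hF : infDist 0 F = 1) (haF : ∀ i ∈ T, a i ∈ F)
    (hρ : ∀ i ∈ T, 0 < ρ i) (hsmall : ∀ i ∈ T, 4 * ρ i ≤ ‖a i‖) {δ τ : ℝ} (hδ : 0 < δ)
    (hτ : 0 ≤ τ) (hτ1 : τ ≤ 1) {B : Set (En n)} (hB : ball 0 (1 / 2) ⊆ B) :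
    ENNReal.ofReal (1 / 2) * volume (ball (0 : En n) (1 / 2)) ≤
      ∫⁻ x in B, ‖coverTest T a ρ x‖ₑ ^ p * ENNReal.ofReal (regDist F δ x) ^ τ := by
  refine le_trans ?_ (lintegral_mono_set hB)
  rw [← setLIntegral_const]
  refine setLIntegral_mono' measurableSet_ball fun x hx => ?_
  have hD : 1 / 2 ≤ regDist F δ x := by
    have h := infDist_le_infDist_add_dist (s := F) (x := 0) (y := x)
    rw [hF, dist_comm] at h
    rw [regDist]
    linarith [mem_ball.1 hx]
  rw [coverTest_eq_one hF haF hρ hsmall hx, enorm_one, ENNReal.one_rpow, one_mul,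
    ENNReal.ofReal_rpow_of_pos (regDist_pos F hδ x)]
  refine ENNReal.ofReal_le_ofReal (le_trans ?_ (Real.rpow_le_rpow (by norm_num) hD hτ))
  simpa only [Real.rpow_one] using
    Real.rpow_le_rpow_of_exponent_ge (by norm_num : (0 : ℝ) < 1 / 2) (by norm_num) hτ1

lemma div_le_of_le_mul_add {c₀ B b s : ℝ≥0∞} (hc₀ : c₀ ≠ ∞) (hb : b ≤ 1) (hBb : 2 * (B * b) ≤ c₀)
    (h : c₀ ≤ B * (s + b * (s + 1))) : c₀ / (4 * B) ≤ s := by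
  refine ENNReal.div_le_of_le_mul' ?_
  have hle : c₀ + c₀ ≤ 4 * B * s + c₀ := calc
    c₀ + c₀ ≤ 2 * (B * (s + b * (s + 1))) := by rw [two_mul]; gcongr
    _ = 2 * B * s + 2 * B * s * b + 2 * (B * b) := by ring
    _ ≤ 2 * B * s + 2 * B * s * 1 + c₀ := by gcongr
    _ = 4 * B * s + c₀ := by ring
  exact (ENNReal.add_le_add_iff_right hc₀).1 hle

lemma exists_content_lower_bound (n : ℕ) {p c : ℝ} (hp : 1 < p) (hc : 0 < c) :
    ∃ β : ℝ, ∃ η : ℝ≥0, 0 < β ∧ β * p ≤ 1 ∧ β * p ≤ p - 1 ∧ 0 < η ∧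
      ∀ F : Set (En n), IsClosed F → infDist 0 F = 1 →
      LocUnifPFatAt p F (F ∩ closedBall 0 53) c 111 →
      ∀ (T : Finset ι) (a : ι → En n) (ρ : ι → ℝ), (∀ i ∈ T, a i ∈ F) → (∀ i ∈ T, 0 < ρ i) →
      (∀ i ∈ T, 4 * ρ i ≤ ‖a i‖) →
      F ∩ closedBall 0 16 ⊆ ⋃ i ∈ T, closedBall (a i) (ρ i) →
      η ≤ ∑ i ∈ T, ENNReal.ofReal (ρ i ^ (n - p + β * p)) := by
  obtain ⟨A, hpoincare⟩ := exists_local_weighted_poincare n hp hc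
  obtain ⟨K, henergy⟩ := exists_energy_coverTest_le (ι := ι) n hp
  have := measure_ball_lt_top (μ := volume) (x := (0 : En n)) (r := 1 / 2)
  have hvol0 := measure_ball_pos volume (0 : En n) one_half_pos
  set c₀ : ℝ≥0∞ := ENNReal.ofReal (1 / 2) * volume (ball (0 : En n) (1 / 2))
  have hc₀ : c₀ ≠ ∞ := by finiteness
  have hc₀0 : c₀ ≠ 0 := mul_ne_zero (by norm_num) hvol0.ne'
  have hB : A * ENNReal.ofReal 2 ^ p * K ≠ ∞ := by finiteness
  lift A * ENNReal.ofReal 2 ^ p * K to ℝ≥0 using hB with B hBeq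
  obtain ⟨β, hβ, hβ1, hβp, hone, hAβ, hBβ⟩ := exists_small_exponent hp A (2 * B) hc₀0
  obtain ⟨η, hη, hηle⟩ := ENNReal.lt_iff_exists_nnreal_btwn.1
    (ENNReal.div_pos hc₀0 (by finiteness : 4 * (B : ℝ≥0∞) ≠ ∞))
  refine ⟨β, η, hβ, hβ1, hβp, by exact_mod_cast hη, ?_⟩
  intro F hFc hF hfat T a ρ haF hρ hsmall hcov
  have hFne : F.Nonempty := nonempty_iff_ne_empty.2 fun h => by simp [h] at hF
  obtain ⟨z, hzF, hz⟩ := hFc.exists_infDist_eq_dist hFne (0 : En n)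
  rw [hF] at hz
  obtain ⟨δ, hδ, hδ1, hδρ⟩ := exists_pos_le_one_forall_le hρ
  obtain ⟨hlocal, hglobal⟩ := henergy (β * p) F T a ρ δ (by positivity) hβ1 hF haF hρ hδ hδ1 hδρ
  have hlow := half_mul_volume_le_setLIntegral_coverTest (p := p) hF haF hρ hsmall hδ
    (by positivity) hβ1 (ball_subset_ball' (by linarith) : ball 0 (1 / 2) ⊆ ball z 2)
  have hup := hpoincare F δ 16 37 β hδ hβ hβ1 hAβ hFne (by norm_num; exact hfat) _
    (isHardyTest_coverTest hF hρ hcov hδ1) enorm_coverTest_le_one z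
    ⟨hzF, mem_closedBall'.2 (by linarith)⟩ 2 two_pos (by norm_num)
  refine hηle.le.trans (div_le_of_le_mul_add hc₀ hone (by simpa [mul_assoc] using hBβ) ?_)
  have hsub : ball z (3 * 2) ⊆ ball 0 8 := ball_subset_ball' (by rw [dist_comm]; linarith)
  calc c₀ ≤ _ := hlow
    _ ≤ _ := hup
    _ ≤ A * ENNReal.ofReal 2 ^ p * (K * ∑ i ∈ T, ENNReal.ofReal (ρ i ^ (n - p + β * p)) +
        ENNReal.ofReal β ^ (p - 1) *
          (K * (∑ i ∈ T, ENNReal.ofReal (ρ i ^ (n - p + β * p)) + 1))) := by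
      gcongr
      exact (lintegral_mono_set hsub).trans hlocal
    _ = _ := by rw [hBeq]; ring

end ContentLowerBound

section Covering

lemma measure_le_of_forall_closedBall_le {X : Type*} [PseudoMetricSpace X] [MeasurableSpace X]
    [OpensMeasurableSpace X] [TopologicalSpace.SeparableSpace X] {μ ν : Measure X} {A : Set X}
    {R : X → ℝ} {R₀ : ℝ} {K : ℝ≥0∞} (hR : ∀ y ∈ A, 0 < R y) (hR₀ : ∀ y ∈ A, R y ≤ R₀)
    (h : ∀ y ∈ A, μ (closedBall y (5 * R y)) ≤ K * ν (closedBall y (R y))) :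
    μ A ≤ K * ν univ := by
  obtain ⟨u, huA, hdisj, hcov⟩ := Vitali.exists_disjoint_subfamily_covering_enlargement_closedBall
    A id R R₀ hR₀ 5 (by norm_num)
  simp only [id] at hdisj hcov
  have hcount : u.Countable := (hdisj.mono fun _ => ball_subset_closedBall).countable_of_isOpen
    (fun _ _ => isOpen_ball) fun y hy => nonempty_ball.2 (hR y (huA hy))
  have hsub : A ⊆ ⋃ y ∈ u, closedBall y (5 * R y) := fun y hy => by
    obtain ⟨b, hb, hyb⟩ := hcov y hy
    exact mem_iUnion₂.2 ⟨b, hb, hyb (mem_closedBall_self (hR y hy).le)⟩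
  calc μ A ≤ μ (⋃ y ∈ u, closedBall y (5 * R y)) := measure_mono hsub
    _ ≤ ∑' y : u, μ (closedBall (y : X) (5 * R y)) := measure_biUnion_le μ hcount _
    _ ≤ ∑' y : u, K * ν (closedBall (y : X) (R y)) := ENNReal.tsum_le_tsum fun y => h y (huA y.2)
    _ = K * ν (⋃ y ∈ u, closedBall y (R y)) := by
        rw [ENNReal.tsum_mul_left, measure_biUnion hcount hdisj fun _ _ => measurableSet_closedBall]
    _ ≤ K * ν univ := mul_le_mul_right (measure_mono (subset_univ _)) _

lemma measure_le_mul_sum_of_forall_closedBall_le {X : Type*} [PseudoMetricSpace X]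
    [MeasurableSpace X] [OpensMeasurableSpace X] [TopologicalSpace.SeparableSpace X]
    {μ : Measure X} {A : Set X} {R : X → ℝ} {R₀ : ℝ} {K : ℝ≥0∞} (T : Finset X) (w : X → ℝ≥0∞)
    (hR : ∀ y ∈ A, 0 < R y) (hR₀ : ∀ y ∈ A, R y ≤ R₀)
    (h : ∀ y ∈ A, μ (closedBall y (5 * R y)) ≤ K * ∑ x ∈ T with dist x y ≤ R y, w x) :
    μ A ≤ K * ∑ x ∈ T, w x := by
  set ν : Measure X := ∑ x ∈ T, w x • Measure.dirac x with hν
  have huniv : ν univ = ∑ x ∈ T, w x := by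
    simp only [hν, Measure.coe_finsetSum, Finset.sum_apply, Measure.smul_apply, measure_univ,
      smul_eq_mul, mul_one]
  have hball : ∀ y r, ν (closedBall y r) = ∑ x ∈ T with dist x y ≤ r, w x := fun y r => by
    simp only [hν, Measure.coe_finsetSum, Finset.sum_apply, Measure.smul_apply, smul_eq_mul,
      Measure.dirac_apply' _ measurableSet_closedBall, Finset.sum_filter]
    exact Finset.sum_congr rfl fun x _ => by by_cases h : dist x y ≤ r <;> simp [h]
  rw [← huniv]
  exact measure_le_of_forall_closedBall_le hR hR₀ fun y hy => by simpa only [hball] using h y hy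

lemma measure_closedBall_mul_le {E : Type*} [NormedAddCommGroup E] [NormedSpace ℝ E]
    [FiniteDimensional ℝ E] [MeasurableSpace E] [BorelSpace E] (μ : Measure E)
    [μ.IsAddHaarMeasure] (x : E) {k r R s : ℝ} (hk : 0 ≤ k) (hr : 0 < r) (hrR : r ≤ R)
    (hs : s ≤ Module.finrank ℝ E) :
    μ (closedBall x (k * r)) ≤ ENNReal.ofReal (k ^ Module.finrank ℝ E *
      R ^ (Module.finrank ℝ E - s)) * μ (ball 0 1) * ENNReal.ofReal (r ^ s) := by
  rw [Measure.addHaar_closedBall μ x (mul_nonneg hk hr.le), mul_right_comm,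
    ← ENNReal.ofReal_mul (by have := hr.trans_le hrR; positivity), mul_pow, mul_assoc]
  gcongr
  calc r ^ Module.finrank ℝ E = r ^ (Module.finrank ℝ E - s) * r ^ s := by
        rw [← Real.rpow_add hr, sub_add_cancel, Real.rpow_natCast]
    _ ≤ R ^ (Module.finrank ℝ E - s) * r ^ s := by
        gcongr

lemma measure_biUnion_closedBall_mul_le {E : Type*} [NormedAddCommGroup E] [NormedSpace ℝ E]
    [FiniteDimensional ℝ E] [MeasurableSpace E] [BorelSpace E] (μ : Measure E)
    [μ.IsAddHaarMeasure] (T : Finset E) {ρ : E → ℝ} {k R s : ℝ} (hk : 0 ≤ k)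
    (hρ : ∀ x ∈ T, 0 < ρ x) (hρR : ∀ x ∈ T, ρ x ≤ R) (hs : s ≤ Module.finrank ℝ E) :
    μ (⋃ x ∈ T, closedBall x (k * ρ x)) ≤ ENNReal.ofReal (k ^ Module.finrank ℝ E *
      R ^ (Module.finrank ℝ E - s)) * μ (ball 0 1) * ∑ x ∈ T, ENNReal.ofReal (ρ x ^ s) := by
  refine (measure_biUnion_finset_le _ _).trans ?_
  rw [Finset.mul_sum]
  exact Finset.sum_le_sum fun x hx =>
    measure_closedBall_mul_le μ x hk (hρ x hx) (hρR x hx) hs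

lemma measure_le_mul_sum_of_forall_rpow_le {E : Type*} [NormedAddCommGroup E] [NormedSpace ℝ E]
    [FiniteDimensional ℝ E] [MeasurableSpace E] [BorelSpace E] (μ : Measure E)
    [μ.IsAddHaarMeasure] {A : Set E} {R : E → ℝ} {R₀ k s : ℝ} {η : ℝ≥0} (hη : 0 < η) (hk : 0 < k)
    (hR : ∀ y ∈ A, 0 < R y) (hR₀ : ∀ y ∈ A, R y ≤ R₀) (hs : s ≤ Module.finrank ℝ E)
    (T : Finset E) (w : E → ℝ≥0∞)
    (h : ∀ y ∈ A, η * ENNReal.ofReal (R y ^ s) ≤ ∑ x ∈ T with dist x y ≤ k * R y, w x) :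
    μ A ≤ ENNReal.ofReal ((5 * k) ^ Module.finrank ℝ E * R₀ ^ (Module.finrank ℝ E - s)) *
      μ (ball 0 1) / η * ∑ x ∈ T, w x := by
  have hη0 : (η : ℝ≥0∞) ≠ 0 := by exact_mod_cast hη.ne'
  refine measure_le_mul_sum_of_forall_closedBall_le (R := fun y => k * R y) (R₀ := k * R₀) T w
    (fun y hy => mul_pos hk (hR y hy)) (fun y hy => mul_le_mul_of_nonneg_left (hR₀ y hy) hk.le)
    fun y hy => ?_
  rw [← mul_assoc]
  refine (measure_closedBall_mul_le μ y (by positivity) (hR y hy) (hR₀ y hy) hs).trans ?_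
  refine le_trans ?_ (mul_le_mul_right (h y hy) _)
  rw [← mul_assoc, ENNReal.div_mul_cancel hη0 ENNReal.coe_ne_top]

end Covering

section Holes

variable {n : ℕ} {p c : ℝ} {F : Set (En n)} {y : En n} {R : ℝ}

lemma shiftedSet_preimage (F : Set (En n)) (y : En n) (R : ℝ) (z : En n) (r : ℝ) :
    shiftedSet {w | y + R • w ∈ F} z r = shiftedSet F (y + R • z) (R * r) := by
  ext w
  simp only [shiftedSet, mem_ofPred_eq, smul_add, smul_smul, add_assoc]

lemma locUnifPFatAt_preimage {S S' : Set (En n)} {r₀ r₁ : ℝ} (hfat : LocUnifPFatAt p F S c r₀)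
    (hR : 0 < R) (hS : ∀ z ∈ S', y + R • z ∈ S) (hr : R * r₁ ≤ r₀) :
    LocUnifPFatAt p {w | y + R • w ∈ F} S' c r₁ := fun z hz r hr0 hr1 => by
  rw [shiftedSet_preimage]
  exact hfat _ (hS z hz) _ (mul_pos hR hr0) ((mul_lt_mul_of_pos_left hr1 hR).trans_le hr)

lemma norm_add_smul_le (hR : 0 ≤ R) (y w : En n) : ‖y + R • w‖ ≤ ‖y‖ + R * ‖w‖ := by
  simpa only [norm_smul, Real.norm_of_nonneg hR] using norm_add_le y (R • w)

lemma norm_inv_smul_sub (hR : 0 < R) (x y : En n) : ‖R⁻¹ • (x - y)‖ = dist x y / R := by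
  rw [norm_smul, norm_inv, Real.norm_of_nonneg hR.le, dist_eq_norm, inv_mul_eq_div]

lemma add_smul_inv_smul_sub (hR : R ≠ 0) (x y : En n) : y + R • R⁻¹ • (x - y) = x := by
  rw [smul_inv_smul₀ hR, add_sub_cancel]

lemma infDist_preimage_eq_one (hF : IsClosed F) (hne : F.Nonempty) (hy : 0 < infDist y F) :
    infDist 0 {w : En n | y + infDist y F • w ∈ F} = 1 := by
  obtain ⟨z, hz, hyz⟩ := hF.exists_infDist_eq_dist hne y
  have hmem : (infDist y F)⁻¹ • (z - y) ∈ {w : En n | y + infDist y F • w ∈ F} := by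
    rwa [mem_ofPred_eq, add_smul_inv_smul_sub hy.ne']
  refine le_antisymm ?_ ((le_infDist ⟨_, hmem⟩).2 fun {w} hw => ?_)
  · refine (infDist_le_dist_of_mem hmem).trans_eq ?_
    rw [dist_zero_left, norm_inv_smul_sub hy, dist_comm, ← hyz, div_self hy.ne']
  · have h : infDist y F ≤ dist y (y + infDist y F • w) := infDist_le_dist_of_mem hw
    rw [dist_self_add_right, norm_smul, Real.norm_of_nonneg hy.le] at h
    rw [dist_zero_left]
    exact (le_mul_iff_one_le_right hy).1 h

variable {T : Finset (En n)} {ρ : En n → ℝ}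

lemma preimage_inter_closedBall_subset_of_hole (hR : 0 < R) (hyR : ‖y‖ + R * 16 ≤ 1 / 2)
    (hcov : F ∩ closedBall 0 (1 / 2) ⊆ ⋃ x ∈ T, closedBall x (ρ x))
    (hhole : ∀ x ∈ T, y ∉ closedBall x (4 * ρ x)) :
    {w | y + R • w ∈ F} ∩ closedBall 0 16 ⊆
      ⋃ x ∈ T.filter fun x => dist x y ≤ 22 * R, closedBall (R⁻¹ • (x - y)) (ρ x / R) := by
  rintro w ⟨hwF, hw⟩
  have hRw : R * ‖w‖ ≤ R * 16 := by
    gcongr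
    exact mem_closedBall_zero_iff.1 hw
  obtain ⟨x, hx, hwx⟩ := mem_iUnion₂.1 (hcov ⟨hwF, mem_closedBall_zero_iff.2
    ((norm_add_smul_le hR.le y w).trans (by linarith))⟩)
  have hyx := not_le.1 (mt mem_closedBall.2 (hhole x hx))
  rw [mem_closedBall] at hwx
  have hxy : dist x y ≤ 22 * R := by
    have h := dist_triangle_left y x (y + R • w)
    rw [dist_self_add_left, norm_smul, Real.norm_of_nonneg hR.le] at h
    rw [dist_comm]
    linarith
  refine mem_iUnion₂.2 ⟨x, Finset.mem_filter.2 ⟨hx, hxy⟩, ?_⟩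
  have hscale : w - R⁻¹ • (x - y) = R⁻¹ • (y + R • w - x) := by
    rw [add_sub_right_comm, smul_add, inv_smul_smul₀ hR.ne', ← neg_sub x y, smul_neg]
    abel
  rw [mem_closedBall, dist_eq_norm, hscale, norm_inv_smul_sub hR]
  gcongr

lemma infDist_pos_of_hole (hF : IsClosed F) (hne : F.Nonempty) (hρ : ∀ x ∈ T, 0 < ρ x)
    (hcov : F ∩ closedBall 0 (1 / 2) ⊆ ⋃ x ∈ T, closedBall x (ρ x)) (hy : ‖y‖ ≤ 1 / 2)
    (hhole : ∀ x ∈ T, y ∉ closedBall x (4 * ρ x)) : 0 < infDist y F := by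
  refine (hF.notMem_iff_infDist_pos hne).1 fun h => ?_
  obtain ⟨x, hx, hyx⟩ := mem_iUnion₂.1 (hcov ⟨h, mem_closedBall_zero_iff.2 hy⟩)
  exact hhole x hx (closedBall_subset_closedBall (by linarith [hρ x hx]) hyx)

lemma exists_content_lower_bound_hole (n : ℕ) (hp : 1 < p) (hc : 0 < c) :
    ∃ β : ℝ, ∃ η : ℝ≥0, 0 < β ∧ β * p ≤ 1 ∧ β * p ≤ p - 1 ∧ 0 < η ∧
      ∀ F : Set (En n), IsClosed F → 0 ∈ F → LocUnifPFatAt p F (F ∩ closedBall 0 2) c 1 →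
      ∀ (T : Finset (En n)) (ρ : En n → ℝ), (∀ x ∈ T, x ∈ F) → (∀ x ∈ T, 0 < ρ x) →
      F ∩ closedBall 0 (1 / 2) ⊆ ⋃ x ∈ T, closedBall x (ρ x) →
      ∀ y ∈ ball (0 : En n) (1 / 200), (∀ x ∈ T, y ∉ closedBall x (4 * ρ x)) →
      η * ENNReal.ofReal (infDist y F ^ (n - p + β * p)) ≤
        ∑ x ∈ T with dist x y ≤ 22 * infDist y F, ENNReal.ofReal (ρ x ^ (n - p + β * p)) := by
  obtain ⟨β, η, hβ, hβ1, hβp, hη, hcontent⟩ := exists_content_lower_bound (ι := En n) n hp hc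
  refine ⟨β, η, hβ, hβ1, hβp, hη, fun F hF h0F hfat T ρ hTF hρ hcov y hy hhole => ?_⟩
  rw [mem_ball_zero_iff] at hy
  have hne : F.Nonempty := ⟨0, h0F⟩
  have hpos := infDist_pos_of_hole hF hne hρ hcov (by linarith) hhole
  have hle : infDist y F ≤ 1 / 200 := by
    simpa only [dist_zero_right] using (infDist_le_dist_of_mem h0F (x := y)).trans
      (by rw [dist_zero_right]; exact hy.le)
  have hone := infDist_preimage_eq_one hF hne hpos
  set R := infDist y F
  have hfatR : LocUnifPFatAt p {w | y + R • w ∈ F}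
      ({w | y + R • w ∈ F} ∩ closedBall 0 53) c 111 := by
    refine locUnifPFatAt_preimage hfat hpos (fun z hz => ⟨hz.1, ?_⟩) (by linarith)
    rw [mem_closedBall_zero_iff]
    have h := mul_le_mul hle (mem_closedBall_zero_iff.1 hz.2) (norm_nonneg z) (by norm_num)
    linarith [norm_add_smul_le hpos.le y z]
  have h := hcontent {w | y + R • w ∈ F} (hF.preimage (by fun_prop)) hone hfatR
    (T.filter fun x => dist x y ≤ 22 * R) (fun x => R⁻¹ • (x - y)) (fun x => ρ x / R)
    (fun x hx => by
      rw [mem_ofPred_eq, add_smul_inv_smul_sub hpos.ne']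
      exact hTF x (Finset.mem_filter.1 hx).1)
    (fun x hx => div_pos (hρ x (Finset.mem_filter.1 hx).1) hpos)
    (fun x hx => by
      have := not_le.1 (mt mem_closedBall.2 (hhole x (Finset.mem_filter.1 hx).1))
      rw [norm_inv_smul_sub hpos, dist_comm, ← mul_div_assoc]
      gcongr)
    (preimage_inter_closedBall_subset_of_hole hpos (by linarith) hcov hhole)
  refine (mul_le_mul_left h _).trans_eq ?_
  rw [Finset.sum_mul]
  refine Finset.sum_congr rfl fun x hx => ?_
  have hρx := hρ x (Finset.mem_filter.1 hx).1
  rw [← ENNReal.ofReal_mul (by positivity), Real.div_rpow hρx.le hpos.le,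
    div_mul_cancel₀ _ (by positivity)]

lemma exists_content_lower_bound_cover (n : ℕ) (hp : 1 < p) (hc : 0 < c) :
    ∃ β : ℝ, ∃ η : ℝ≥0, 0 < β ∧ β * p ≤ p - 1 ∧ 0 < η ∧
      ∀ F : Set (En n), IsClosed F → 0 ∈ F → LocUnifPFatAt p F (F ∩ closedBall 0 2) c 1 →
      ∀ (T : Finset (En n)) (ρ : En n → ℝ), (∀ x ∈ T, x ∈ F) → (∀ x ∈ T, 0 < ρ x) →
      (∀ x ∈ T, ρ x ≤ 20) → F ∩ closedBall 0 (1 / 2) ⊆ ⋃ x ∈ T, closedBall x (ρ x) →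
      η ≤ ∑ x ∈ T, ENNReal.ofReal (ρ x ^ (n - p + β * p)) := by
  obtain ⟨β, η, hβ, hβ1, hβp, hη, hhole⟩ := exists_content_lower_bound_hole n hp hc
  set s : ℝ := n - p + β * p
  have hsn : s ≤ Module.finrank ℝ (En n) := by rw [finrank_euclideanSpace_fin]; linarith
  set C₁ : ℝ≥0∞ := ENNReal.ofReal (4 ^ Module.finrank ℝ (En n) *
    20 ^ (Module.finrank ℝ (En n) - s)) * volume (ball (0 : En n) 1)
  set C₂ : ℝ≥0∞ := ENNReal.ofReal ((5 * 22) ^ Module.finrank ℝ (En n) *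
    1 ^ (Module.finrank ℝ (En n) - s)) * volume (ball (0 : En n) 1) / η
  have := measure_ball_lt_top (μ := volume) (x := (0 : En n)) (r := 1)
  have hη0 : (η : ℝ≥0∞) ≠ 0 := by exact_mod_cast hη.ne'
  obtain ⟨κ, hκ, hκle⟩ := ENNReal.lt_iff_exists_nnreal_btwn.1 (ENNReal.div_pos
    (measure_ball_pos volume (0 : En n) (by norm_num : (0 : ℝ) < 1 / 200)).ne'
    (by finiteness : C₁ + C₂ ≠ ∞))
  refine ⟨β, κ, hβ, hβp, by exact_mod_cast hκ, fun F hF h0F hfat T ρ hTF hρ hρ20 hcov => ?_⟩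
  set M : ℝ≥0∞ := ∑ x ∈ T, ENNReal.ofReal (ρ x ^ s)
  set U : Set (En n) := ⋃ x ∈ T, closedBall x (4 * ρ x)
  have hUM : volume U ≤ C₁ * M :=
    measure_biUnion_closedBall_mul_le volume T (by norm_num) hρ hρ20 hsn
  have hnotMem : ∀ y ∉ U, ∀ x ∈ T, y ∉ closedBall x (4 * ρ x) := fun y hy x hx h =>
    hy (mem_iUnion₂.2 ⟨x, hx, h⟩)
  have hUc : volume (ball (0 : En n) (1 / 200) \ U) ≤ C₂ * M := by
    refine measure_le_mul_sum_of_forall_rpow_le volume hη (by norm_num) (fun y hy => ?_)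
      (fun y hy => ?_) hsn T _
      fun y hy => hhole F hF h0F hfat T ρ hTF hρ hcov y hy.1 (hnotMem y hy.2)
    · exact infDist_pos_of_hole hF ⟨0, h0F⟩ hρ hcov
        (by linarith [mem_ball_zero_iff.1 hy.1]) (hnotMem y hy.2)
    · linarith [infDist_le_dist_of_mem h0F (x := y), mem_ball.1 hy.1]
  refine hκle.le.trans (ENNReal.div_le_of_le_mul' ?_)
  calc volume (ball (0 : En n) (1 / 200)) ≤ volume (U ∪ ball (0 : En n) (1 / 200) \ U) :=
        measure_mono (by rw [union_sdiff_self]; exact subset_union_right)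
    _ ≤ volume U + volume (ball (0 : En n) (1 / 200) \ U) := measure_union_le _ _
    _ ≤ C₁ * M + C₂ * M := add_le_add hUM hUc
    _ = (C₁ + C₂) * M := (add_mul _ _ _).symm

end Holes

section BallEnergy

variable {E : Type*} [NormedAddCommGroup E] [NormedSpace ℝ E] [FiniteDimensional ℝ E]
  [MeasurableSpace E] [BorelSpace E] {μ : Measure E} [μ.IsAddHaarMeasure]

lemma lintegral_Ioc_rpow_sub_one {α : ℝ} (hα : 0 < α) :
    ∫⁻ t in Ioc (0 : ℝ) 1, ENNReal.ofReal (t ^ (α - 1)) = ENNReal.ofReal α⁻¹ := by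
  have hint := intervalIntegral.intervalIntegrable_rpow' (a := 0) (b := 1)
    (by linarith : -1 < α - 1)
  rw [intervalIntegrable_iff_integrableOn_Ioc_of_le zero_le_one] at hint
  have hnonneg : 0 ≤ᵐ[volume.restrict (Ioc (0 : ℝ) 1)] fun t => t ^ (α - 1) :=
    ae_restrict_of_forall_mem measurableSet_Ioc fun t ht => Real.rpow_nonneg ht.1.le _
  rw [← ofReal_integral_eq_lintegral_ofReal hint hnonneg,
    ← intervalIntegral.integral_of_le zero_le_one, integral_rpow (Or.inl (by linarith)),
    sub_add_cancel, Real.one_rpow, Real.zero_rpow hα.ne', sub_zero, one_div]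

lemma measure_le_mul_lintegral_ray {u : E → ℝ} (hu : LocallyLipschitz u) {x : E} (hx : 1 ≤ u x)
    {A : Set E} (hA : MeasurableSet A) {R : ℝ} (hAR : A ⊆ ball 0 R)
    (hu0 : ∀ v ∈ A, u (x + v) = 0) :
    μ A ≤ ENNReal.ofReal R *
      ∫⁻ t in Ioc (0 : ℝ) 1, ∫⁻ v in A, ‖fderiv ℝ u (x + t • v)‖ₑ ∂μ := by
  have hmeas : Measurable fun z : E × ℝ => ‖fderiv ℝ u (x + z.2 • z.1)‖ₑ :=
    ((measurable_fderiv ℝ u).comp (by fun_prop)).enorm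
  have hray : ∀ᵐ v ∂μ.restrict A, 1 ≤ ENNReal.ofReal R *
      ∫⁻ t in Ioc (0 : ℝ) 1, ‖fderiv ℝ u (x + t • v)‖ₑ := by
    filter_upwards [ae_restrict_mem hA, ae_restrict_of_ae (ae_ae_differentiableAt_ray hu x)]
      with v hv hd
    have hdrop : 1 ≤ ‖u (x + v) - u x‖ₑ := by
      rwa [hu0 v hv, zero_sub, enorm_neg, Real.enorm_of_nonneg (zero_le_one.trans hx),
        ENNReal.one_le_ofReal]
    refine hdrop.trans ((enorm_sub_le_mul_lintegral_fderiv hu hd).trans ?_)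
    gcongr
    rw [← ofReal_norm]
    exact ENNReal.ofReal_le_ofReal (mem_ball_zero_iff.1 (hAR hv)).le
  calc μ A = ∫⁻ _ in A, 1 ∂μ := (setLIntegral_one A).symm
    _ ≤ ∫⁻ v in A, ENNReal.ofReal R *
          (∫⁻ t in Ioc (0 : ℝ) 1, ‖fderiv ℝ u (x + t • v)‖ₑ) ∂μ := lintegral_mono_ae hray
    _ = _ := by
        rw [lintegral_const_mul' _ _ ENNReal.ofReal_ne_top,
          lintegral_lintegral_swap hmeas.aemeasurable]

lemma rpow_setLIntegral_ray_le {f : E → ℝ≥0∞} (hf : Measurable f) {q : ℝ} (hq : 1 < q)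
    {A : Set E} {R : ℝ} (hAR : A ⊆ ball 0 R) (x : E) {t : ℝ} (ht : 0 < t) :
    (∫⁻ v in A, f (x + t • v) ∂μ) ^ q ≤ μ A ^ (q - 1) *
      (ENNReal.ofReal (t ^ Module.finrank ℝ E)⁻¹ * ∫⁻ y in ball x (t * R), f y ^ q ∂μ) := by
  have h := rpow_lintegral_le_measure_univ_rpow_mul (μ.restrict A) hq
    (f := fun v => f (x + t • v)) (hf.comp (by fun_prop)).aemeasurable
  rw [Measure.restrict_apply_univ] at h
  refine h.trans (mul_le_mul_right ?_ _)
  rw [← setLIntegral_ball_comp_add_smul μ x ht R fun y => f y ^ q]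
  exact lintegral_mono_set hAR

lemma setLIntegral_ray_le {f : E → ℝ≥0∞} (hf : Measurable f) {q θ : ℝ} (hq : 1 < q)
    {A : Set E} {R : ℝ} (hR : 0 < R) (hAR : A ⊆ ball 0 R) {x : E} {M : ℝ≥0∞}
    (hM : ∀ r, 0 < r → r ≤ R → ∫⁻ y in ball x r, f y ^ q ∂μ ≤
      M * ENNReal.ofReal (r ^ (Module.finrank ℝ E - q + θ))) {t : ℝ} (ht : t ∈ Ioc (0 : ℝ) 1) :
    ∫⁻ v in A, f (x + t • v) ∂μ ≤
      (μ A ^ (q - 1) * (ENNReal.ofReal (R ^ (Module.finrank ℝ E - q + θ)) * M)) ^ q⁻¹ *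
        ENNReal.ofReal (t ^ (θ / q - 1)) := by
  have hq0 : 0 < q := zero_lt_one.trans hq
  have ht0 := ht.1
  set s : ℝ := Module.finrank ℝ E - q + θ with hs
  have hpow : (t ^ Module.finrank ℝ E)⁻¹ * (t * R) ^ s = R ^ s * (t ^ (θ / q - 1)) ^ q := by
    rw [Real.mul_rpow ht0.le hR.le, ← mul_assoc, mul_comm, ← Real.rpow_natCast,
      ← Real.rpow_neg ht0.le, ← Real.rpow_add ht0, ← Real.rpow_mul ht0.le, hs, sub_one_mul,
      div_mul_cancel₀ _ hq0.ne']
    congr 2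
    ring
  rw [← ENNReal.rpow_le_rpow_iff hq0, ENNReal.mul_rpow_of_nonneg _ _ hq0.le,
    ENNReal.rpow_inv_rpow hq0.ne', ENNReal.ofReal_rpow_of_pos (by positivity)]
  calc (∫⁻ v in A, f (x + t • v) ∂μ) ^ q
      ≤ μ A ^ (q - 1) * (ENNReal.ofReal (t ^ Module.finrank ℝ E)⁻¹ *
        (M * ENNReal.ofReal ((t * R) ^ s))) := by
        refine (rpow_setLIntegral_ray_le hf hq hAR x ht0).trans ?_
        gcongr
        exact hM _ (mul_pos ht0 hR) (mul_le_of_le_one_left hR.le ht.2)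
    _ = μ A ^ (q - 1) * (ENNReal.ofReal (R ^ s) * M) *
        ENNReal.ofReal ((t ^ (θ / q - 1)) ^ q) := by
        rw [mul_left_comm _ M, ← ENNReal.ofReal_mul (by positivity), hpow,
          ENNReal.ofReal_mul (by positivity)]
        ring

lemma measure_le_mul_of_forall_setLIntegral_fderiv_le {u : E → ℝ} (hu : LocallyLipschitz u)
    {x : E} (hx : 1 ≤ u x) {A : Set E} (hA : MeasurableSet A) {R : ℝ} (hR : 0 < R)
    (hAR : A ⊆ ball 0 R) (hu0 : ∀ v ∈ A, u (x + v) = 0) {q θ : ℝ} (hq : 1 < q) (hθ : 0 < θ)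
    {M : ℝ≥0∞} (hM : ∀ r, 0 < r → r ≤ R → ∫⁻ y in ball x r, ‖fderiv ℝ u y‖ₑ ^ q ∂μ ≤
      M * ENNReal.ofReal (r ^ (Module.finrank ℝ E - q + θ))) :
    μ A ≤ ENNReal.ofReal ((R * (q / θ)) ^ q * R ^ (Module.finrank ℝ E - q + θ)) * M := by
  have hq0 : 0 < q := zero_lt_one.trans hq
  set s : ℝ := Module.finrank ℝ E - q + θ
  set m : ℝ≥0∞ := μ A ^ (q - 1) * (ENNReal.ofReal (R ^ s) * M) with hm
  have hle : μ A ≤ ENNReal.ofReal (R * (q / θ)) * m ^ q⁻¹ := by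
    calc μ A ≤ ENNReal.ofReal R * ∫⁻ t in Ioc (0 : ℝ) 1,
          m ^ q⁻¹ * ENNReal.ofReal (t ^ (θ / q - 1)) :=
          (measure_le_mul_lintegral_ray hu hx hA hAR hu0).trans <| mul_le_mul_right
            (setLIntegral_mono' measurableSet_Ioc fun t ht =>
              setLIntegral_ray_le (measurable_fderiv ℝ u).enorm hq hR hAR hM ht) _
      _ = ENNReal.ofReal (R * (q / θ)) * m ^ q⁻¹ := by
          rw [lintegral_const_mul _ (by fun_prop), lintegral_Ioc_rpow_sub_one (by positivity),
            inv_div, ENNReal.ofReal_mul hR.le, mul_right_comm, mul_assoc]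
  have hpow : μ A ^ (q - 1) * μ A ≤
      μ A ^ (q - 1) * (ENNReal.ofReal ((R * (q / θ)) ^ q * R ^ s) * M) := by
    calc μ A ^ (q - 1) * μ A = μ A ^ q := by
          nth_rw 2 [← ENNReal.rpow_one (μ A)]
          rw [← ENNReal.rpow_add_of_nonneg _ _ (by linarith) zero_le_one, sub_add_cancel]
      _ ≤ (ENNReal.ofReal (R * (q / θ)) * m ^ q⁻¹) ^ q := ENNReal.rpow_le_rpow hle hq0.le
      _ = _ := by
          rw [ENNReal.mul_rpow_of_nonneg _ _ hq0.le, ENNReal.rpow_inv_rpow hq0.ne',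
            ENNReal.ofReal_rpow_of_pos (by positivity), hm, ENNReal.ofReal_mul (by positivity),
            mul_left_comm, mul_assoc]
  rcases eq_or_ne (μ A) 0 with h0 | h0
  · rw [h0]
    exact zero_le
  have hfin : μ A ≠ ∞ := ((measure_mono hAR).trans_lt measure_ball_lt_top).ne
  exact (ENNReal.mul_le_mul_iff_right (by simp [h0, hfin]) (by finiteness)).1 hpow

lemma exists_ball_energy_ge [Nontrivial E] (μ : Measure E) [μ.IsAddHaarMeasure] {q θ : ℝ}
    (hq : 1 < q) (hθ : 0 < θ) :
    ∃ κ : ℝ≥0, 0 < κ ∧ ∀ (u : E → ℝ) (x : E), LocallyLipschitz u → 1 ≤ u x →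
      (∀ v, 2 < ‖v‖ → u (x + v) = 0) → ∃ r : ℝ, 0 < r ∧ r ≤ 4 ∧
      κ * ENNReal.ofReal (r ^ (Module.finrank ℝ E - q + θ)) ≤
        ∫⁻ y in ball x r, ‖fderiv ℝ u y‖ₑ ^ q ∂μ := by
  obtain ⟨v₀, hv₀⟩ := exists_norm_eq E (by norm_num : (0 : ℝ) ≤ 3)
  obtain ⟨κ, hκ0, hκ⟩ := ENNReal.lt_iff_exists_nnreal_btwn.1 (ENNReal.div_pos
    (measure_ball_pos μ v₀ one_pos).ne' (ENNReal.ofReal_ne_top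
      (r := (4 * (q / θ)) ^ q * 4 ^ (Module.finrank ℝ E - q + θ))))
  refine ⟨κ, by exact_mod_cast hκ0, fun u x hu hux hu0 => ?_⟩
  by_contra! hsmall
  have hfar : ∀ v ∈ ball v₀ 1, 2 < ‖v‖ := fun v hv => by
    have h := norm_sub_norm_le v₀ v
    rw [mem_ball', dist_eq_norm] at hv
    linarith
  have h := measure_le_mul_of_forall_setLIntegral_fderiv_le hu hux measurableSet_ball
    (by norm_num : (0 : ℝ) < 4) (ball_subset_ball' (by rw [dist_zero_right]; linarith))
    (fun v hv => hu0 v (hfar v hv)) hq hθ fun r hr hr4 => (hsmall r hr hr4).le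
  exact (ENNReal.div_le_of_le_mul' h).not_gt hκ

end BallEnergy

section EnergyLowerBound

lemma exists_finset_disjoint_closedBall_cover {X : Type*} [PseudoMetricSpace X] {K : Set X}
    (hK : IsCompact K) {r : X → ℝ} (hr : ∀ x ∈ K, 0 < r x) :
    ∃ T : Finset X, ↑T ⊆ K ∧ (T : Set X).PairwiseDisjoint (fun x => closedBall x (r x)) ∧
      K ⊆ ⋃ x ∈ T, closedBall x (5 * r x) := by
  obtain ⟨t, htK, hcov⟩ := hK.elim_nhds_subcover (fun x => ball x (r x))
    fun x hx => ball_mem_nhds x (hr x hx)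
  obtain ⟨R, hR⟩ := (t.finite_toSet.image r).bddAbove
  obtain ⟨v, hvt, hdisj, hvcov⟩ := Vitali.exists_disjoint_subfamily_covering_enlargement_closedBall
    (t : Set X) id r R (fun x hx => hR (mem_image_of_mem r hx)) 5 (by norm_num)
  lift v to Finset X using t.finite_toSet.subset hvt
  refine ⟨v, fun x hx => htK x (hvt hx), hdisj, fun x hx => ?_⟩
  obtain ⟨a, ha, hxa⟩ := mem_iUnion₂.1 (hcov hx)
  obtain ⟨b, hb, hab⟩ := hvcov a ha
  exact mem_iUnion₂.2 ⟨b, hb, hab (ball_subset_closedBall hxa)⟩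

lemma mul_sum_le_lintegral_of_pairwiseDisjoint {X : Type*} [PseudoMetricSpace X]
    [MeasurableSpace X] [OpensMeasurableSpace X] {μ : Measure X} {f : X → ℝ≥0∞} {T : Finset X}
    {r : X → ℝ} (hdisj : (T : Set X).PairwiseDisjoint fun x => closedBall x (r x))
    {κ : ℝ≥0∞} {w : X → ℝ≥0∞} (h : ∀ x ∈ T, κ * w x ≤ ∫⁻ y in ball x (r x), f y ∂μ) :
    κ * ∑ x ∈ T, w x ≤ ∫⁻ y, f y ∂μ := by
  rw [Finset.mul_sum]
  calc ∑ x ∈ T, κ * w x ≤ ∑ x ∈ T, ∫⁻ y in ball x (r x), f y ∂μ := Finset.sum_le_sum h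
    _ = ∫⁻ y in ⋃ x ∈ T, ball x (r x), f y ∂μ :=
        (lintegral_biUnion_finset (hdisj.mono fun _ => ball_subset_closedBall)
          (fun _ _ => measurableSet_ball) f).symm
    _ ≤ ∫⁻ y, f y ∂μ := setLIntegral_le_lintegral _ _

lemma exists_energy_lower_bound {n : ℕ} (hn : 0 < n) {p c : ℝ} (hp : 1 < p) (hc : 0 < c) :
    ∃ ε : ℝ, ∃ κ : ℝ≥0, 0 < ε ∧ ε < p - 1 ∧ 0 < κ ∧
      ∀ F : Set (En n), IsClosed F → 0 ∈ F → LocUnifPFatAt p F (F ∩ closedBall 0 2) c 1 →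
      ∀ u : En n → ℝ, LocallyLipschitz u → (∀ x ∈ F ∩ closedBall 0 (1 / 2), 1 ≤ u x) →
      (∀ x, 1 < ‖x‖ → u x = 0) → κ ≤ ∫⁻ x, ‖fderiv ℝ u x‖ₑ ^ (p - ε) := by
  have : Nonempty (Fin n) := ⟨⟨0, hn⟩⟩
  obtain ⟨β, η, hβ, hβp, hη, hcover⟩ := exists_content_lower_bound_cover n hp hc
  have hε : 0 < β * p / 2 := by positivity
  obtain ⟨κ, hκ, hball⟩ := exists_ball_energy_ge (volume : Measure (En n))
    (by linarith : 1 < p - β * p / 2) hε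
  rw [finrank_euclideanSpace_fin,
    show n - (p - β * p / 2) + β * p / 2 = n - p + β * p by ring] at hball
  set s : ℝ := n - p + β * p
  set M : ℝ≥0 := Real.toNNReal (5 ^ s)
  have hM : 0 < M := Real.toNNReal_pos.2 (by positivity)
  refine ⟨β * p / 2, κ * (η / M), hε, by linarith, by positivity,
    fun F hF h0F hfat u hu hu1 hu0 => ?_⟩
  have hex : ∀ x ∈ F ∩ closedBall 0 (1 / 2), ∃ r : ℝ, 0 < r ∧ r ≤ 4 ∧
      κ * ENNReal.ofReal (r ^ s) ≤ ∫⁻ y in ball x r, ‖fderiv ℝ u y‖ₑ ^ (p - β * p / 2) :=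
    fun x hx => hball u x hu (hu1 x hx) fun v hv => hu0 _ <| by
      linarith [norm_sub_le (x + v) x, mem_closedBall_zero_iff.1 hx.2,
        congrArg norm (add_sub_cancel_left x v)]
  choose! r hr hr4 henergy using hex
  obtain ⟨T, hTF, hdisj, hcov⟩ := exists_finset_disjoint_closedBall_cover
    ((isCompact_closedBall 0 (1 / 2)).inter_left hF) hr
  have hcontent : (η : ℝ≥0∞) ≤ M * ∑ x ∈ T, ENNReal.ofReal (r x ^ s) := by
    refine (hcover F hF h0F hfat T (fun x => 5 * r x) (fun x hx => (hTF hx).1)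
      (fun x hx => by linarith [hr x (hTF hx)]) (fun x hx => by linarith [hr4 x (hTF hx)])
      hcov).trans_eq ?_
    rw [Finset.mul_sum]
    refine Finset.sum_congr rfl fun x hx => ?_
    rw [Real.mul_rpow (by norm_num) (hr x (hTF hx)).le, ENNReal.ofReal_mul (by positivity)]
    rfl
  calc ((κ * (η / M) : ℝ≥0) : ℝ≥0∞) ≤ κ * ∑ x ∈ T, ENNReal.ofReal (r x ^ s) := by
        rw [ENNReal.coe_mul, ENNReal.coe_div hM.ne']
        exact mul_le_mul_right (ENNReal.div_le_of_le_mul' hcontent) _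
    _ ≤ _ := mul_sum_le_lintegral_of_pairwiseDisjoint hdisj fun x hx => henergy x (hTF hx)

end EnergyLowerBound

section ZeroExtension

lemma lipschitzWith_indicator {E F : Type*} [NormedAddCommGroup E] [NormedSpace ℝ E]
    [PseudoMetricSpace F] [Zero F] {O : Set E} {u : E → F} {K : ℝ≥0}
    (hu : LipschitzOnWith K u (closure O)) (hu0 : ∀ x ∈ frontier O, u x = 0) :
    LipschitzWith K (O.indicator u) := by
  have hmixed : ∀ x ∈ O, ∀ y ∉ O, dist (u x) 0 ≤ K * dist x y := fun x hx y hy => by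
    obtain ⟨z, hz, hzO⟩ : (segment ℝ x y ∩ frontier O).Nonempty := by
      rw [frontier_eq_closure_inter_closure]
      exact isPreconnected_closed_iff.1 (convex_segment x y).isPreconnected _ _ isClosed_closure
        isClosed_closure (fun z _ => (em (z ∈ O)).imp (subset_closure ·) (subset_closure ·))
        ⟨x, left_mem_segment ℝ x y, subset_closure hx⟩
        ⟨y, right_mem_segment ℝ x y, subset_closure hy⟩
    rw [← hu0 z hzO]
    refine (hu.dist_le_mul x (subset_closure hx) z hzO.1).trans ?_
    gcongr
    linarith [dist_add_dist_of_mem_segment hz, dist_nonneg (x := z) (y := y)]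
  refine LipschitzWith.of_dist_le_mul fun x y => ?_
  by_cases hx : x ∈ O <;> by_cases hy : y ∈ O
  · rw [indicator_of_mem hx, indicator_of_mem hy]
    exact hu.dist_le_mul x (subset_closure hx) y (subset_closure hy)
  · rw [indicator_of_mem hx, indicator_of_notMem hy]
    exact hmixed x hx y hy
  · rw [indicator_of_notMem hx, indicator_of_mem hy, dist_comm, dist_comm x]
    exact hmixed y hy x hx
  · rw [indicator_of_notMem hx, indicator_of_notMem hy, dist_self]
    positivity

lemma lintegral_enorm_fderiv_indicator {E : Type*} [NormedAddCommGroup E] [NormedSpace ℝ E]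
    [MeasurableSpace E] [BorelSpace E] {μ : Measure E} {O : Set E} (hO : IsOpen O)
    (hfr : μ (frontier O) = 0) (u : E → ℝ) {q : ℝ} (hq : 0 < q) :
    ∫⁻ x, ‖fderiv ℝ (O.indicator u) x‖ₑ ^ q ∂μ = ∫⁻ x in O, ‖fderiv ℝ u x‖ₑ ^ q ∂μ := by
  rw [← lintegral_indicator hO.measurableSet]
  refine lintegral_congr_ae ?_
  filter_upwards [measure_eq_zero_iff_ae_notMem.1 hfr] with x hx
  by_cases hxO : x ∈ O
  · have h : O.indicator u =ᶠ[𝓝 x] u := (eqOn_indicator.eventuallyEq_of_mem (hO.mem_nhds hxO))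
    rw [indicator_of_mem hxO, h.fderiv_eq]
  · have hxc : x ∉ closure O := fun h => hx ⟨h, fun hi => hxO (interior_subset hi)⟩
    have h : O.indicator u =ᶠ[𝓝 x] fun _ => 0 := Filter.eventually_of_mem
      (isClosed_closure.isOpen_compl.mem_nhds hxc)
      fun y hy => indicator_of_notMem (fun hyO => hy (subset_closure hyO)) u
    have hzero : ‖fderiv ℝ (O.indicator u) x‖ = 0 := by
      rw [h.fderiv_eq, fderiv_const_apply, norm_zero]
    rw [indicator_of_notMem hxO, ← ofReal_norm, hzero, ENNReal.ofReal_zero,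
      ENNReal.zero_rpow_of_pos hq]

end ZeroExtension

section Capacity

variable {n : ℕ} {q : ℝ} {K O : Set (En n)}

lemma setLIntegral_enorm_fderiv_rpow_lt_top {E : Type*} [NormedAddCommGroup E] [NormedSpace ℝ E]
    [MeasurableSpace E] {μ : Measure E} {O : Set E} (hO : IsOpen O) (hvol : μ O ≠ ∞) {u : E → ℝ}
    {L : ℝ≥0} (hu : LipschitzOnWith L u O) (hq : 0 ≤ q) :
    ∫⁻ x in O, ‖fderiv ℝ u x‖ₑ ^ q ∂μ < ∞ := by
  refine setLIntegral_lt_top_of_le_nnreal hvol ⟨L ^ q, fun x hx => ?_⟩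
  rw [ENNReal.coe_rpow_of_nonneg _ hq, enorm_eq_nnnorm]
  gcongr
  exact norm_fderiv_le_of_lipschitzOn ℝ (hO.mem_nhds hx) hu

lemma integral_gnorm_rpow_eq {u : En n → ℝ}
    (hfin : ∫⁻ x in O, ‖fderiv ℝ u x‖ₑ ^ q ≠ ∞) :
    ∫ x in O, gnorm u x ^ q = (∫⁻ x in O, ‖fderiv ℝ u x‖ₑ ^ q).toReal := by
  have hmeas := (measurable_fderiv ℝ u).enorm.pow_const q
  rw [← integral_toReal hmeas.aemeasurable (ae_lt_top hmeas hfin)]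
  exact integral_congr_ae (.of_forall fun x => by
    beta_reduce
    rw [gnorm, ← ENNReal.toReal_rpow, toReal_enorm])

lemma le_capP_of_forall_locallyLipschitz (hq : 0 < q) (hO : IsOpen O)
    (hfr : volume (frontier O) = 0) (hvol : volume O ≠ ∞) (hKO : K ⊆ O)
    (hne : (Adm K O 1).Nonempty) {κ : ℝ≥0}
    (h : ∀ v : En n → ℝ, LocallyLipschitz v → (∀ x ∈ K, 1 ≤ v x) → (∀ x ∉ O, v x = 0) →
      κ ≤ ∫⁻ x, ‖fderiv ℝ v x‖ₑ ^ q) : κ ≤ capP q K O := by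
  refine le_csInf (hne.image _) ?_
  rintro _ ⟨u, ⟨⟨L, hL⟩, hu1, hu0⟩, rfl⟩
  have henergy := h (O.indicator u) (lipschitzWith_indicator hL hu0).locallyLipschitz
    (fun x hx => (hu1 x hx).trans_eq (indicator_of_mem (hKO hx) u).symm)
    fun x hx => indicator_of_notMem hx u
  rw [lintegral_enorm_fderiv_indicator hO hfr u hq] at henergy
  have hfin := setLIntegral_enorm_fderiv_rpow_lt_top hO hvol (hL.mono subset_closure) hq.le
  beta_reduce
  rw [integral_gnorm_rpow_eq hfin.ne]
  exact ENNReal.toReal_mono hfin.ne henergy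

lemma exists_le_capP_shiftedSet (hn : 0 < n) {p c : ℝ} (hp : 1 < p) (hc : 0 < c) :
    ∃ ε : ℝ, ∃ κ : ℝ≥0, 0 < ε ∧ ε < p - 1 ∧ 0 < κ ∧
      ∀ (E : Set (En n)), IsClosed E → ∀ z ∈ E, ∀ r, 0 < r →
      LocUnifPFatAt p E (E ∩ closedBall z (2 * r)) c r →
      κ ≤ capP (p - ε) (shiftedSet E z r) (ball 0 1) := by
  obtain ⟨ε, κ, hε, hεp, hκ, henergy⟩ := exists_energy_lower_bound hn hp hc
  refine ⟨ε, κ, hε, hεp, hκ, fun E hE z hz r hr hfat => ?_⟩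
  have hball : shiftedSet E z r ⊆ closedBall 0 (1 / 2) := sep_subset _ _
  refine le_capP_of_forall_locallyLipschitz (by linarith) isOpen_ball
    ((convex_ball 0 1).addHaar_frontier volume) measure_ball_lt_top.ne
    (hball.trans (closedBall_subset_ball (by norm_num)))
    ⟨_, mul_cutoff_mem_adm hball (.const 1) fun _ _ => rfl⟩ fun v hv hv1 hv0 => ?_
  refine henergy {w | z + r • w ∈ E} (hE.preimage (by fun_prop))
    (by rwa [mem_ofPred_eq, smul_zero, add_zero])
    (locUnifPFatAt_preimage hfat hr (fun w hw => ⟨hw.1, ?_⟩) (mul_one r).le) v hv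
    (fun w hw => hv1 w ⟨hw.2, hw.1⟩) fun w hw => hv0 w fun hw1 => ?_
  · rw [mem_closedBall, dist_self_add_left, norm_smul, Real.norm_of_nonneg hr.le, mul_comm]
    gcongr
    exact mem_closedBall_zero_iff.1 hw.2
  · exact hw.not_gt (mem_ball_zero_iff.1 hw1)

end Capacity

/-- **Self-improvement of local uniform `p`-fatness** (Theorem 3.1): if a closed
set `E` is locally uniformly `p`-fat at `E ∩ B̄(x,r_a)` with parameters `c_fat`
and `r_0`, then there are `ε = ε(n,p,c_fat) ∈ (0,p-1)` and
`c̃_fat = c̃_fat(n,p,c_fat) > 0` such that `E` is locally uniformly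
`(p-ε)`-fat at `E ∩ B̄(x, r̃_0)` with parameters `c̃_fat` and
`r̃_0 = (1/4) min{r_a, r_0}`. -/
theorem p_fatness_self_improving
    (n : ℕ) (hn : 0 < n) (p cfat : ℝ) (hp : 1 < p) (hcfat : 0 < cfat) :
    ∃ ε ctil : ℝ, 0 < ε ∧ ε < p - 1 ∧ 0 < ctil ∧
      ∀ (E : Set (En n)), IsClosed E →
        ∀ x ∈ E, ∀ ra r0 : ℝ, 0 < ra → 0 < r0 →
          LocUnifPFatAt p E (E ∩ closedBall x ra) cfat r0 →
          LocUnifPFatAt (p - ε) E (E ∩ closedBall x (1 / 4 * min ra r0)) ctil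
            (1 / 4 * min ra r0) := by
  obtain ⟨ε, κ, hε, hεp, hκ, hcap⟩ := exists_le_capP_shiftedSet hn hp hcfat
  refine ⟨ε, κ, hε, hεp, hκ, fun E hE x _ ra r0 _ _ hfat z hz r hr hrm => ?_⟩
  have hra := min_le_left ra r0
  have hr0 := min_le_right ra r0
  refine hcap E hE z hz.1 r hr fun w hw t ht htr => hfat w ⟨hw.1, ?_⟩ t ht (by linarith)
  exact closedBall_subset_closedBall' (by linarith [mem_closedBall.1 hz.2]) hw.2
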